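/- arXiv:1701.00513 — 2 statements merged into one kernel-verified Lean document; each statement's English description precedes it below -/
import Mathlib

section
/- There exist constants c > 0 and c₁ > 0, independent of N, such that for every N ≥ 1 and every function g : U(N) → ℝ that is Lipschitz with constant L (with respect to the Frobenius metric on U(N)) and satisfies ∫ g dHaar = 0, one has ∫ exp(t g) dHaar ≤ exp(c t² L² / N) for every t ∈ ℝ, and consequently Haar{ g ≥ δ } ≤ exp(−c₁ N δ² / L²) for every δ > 0. -/
open MeasureTheory

noncomputable instance matrixMeasurableSpace {N : ℕ} :
    MeasurableSpace (Matrix (Fin N) (Fin N) ℂ) := MeasurableSpace.pi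

/-- The Frobenius norm of a square complex matrix. -/
noncomputable def frob {N : ℕ} (A : Matrix (Fin N) (Fin N) ℂ) : ℝ :=
  Real.sqrt (∑ i, ∑ j, ‖A i j‖ ^ 2)

/-!
A Lipschitz `g` is first convolved with a polynomial kernel peaking at the identity: this gives
polynomial functions `f` on `U(n)`, uniformly close to `g` and with the same Lipschitz constant `K`.

The Laplacian `Δ` of the `SU(n)` directions preserves polynomials of bounded degree, and Fitting's
lemma gives `f = h - Δu` with `h` invariant under `SU(n)`. Then `h` only depends on the determinant;
by the maximum principle its oscillation is at most `K π / √n`, so Hoeffding's lemma bounds its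
exponential integral. The group has Ricci curvature of order `n`, so Bochner's formula at a maximum
of `‖∇u‖` gives `‖∇u‖ ≤ 2 K / n`. Integrating by parts, the derivative of
`s ↦ ∫ exp (h - s Δu)` is `s ∫ ⟨∇u, ∇f⟩ exp (h - s Δu)`, which is at most `2 s K² / n` times the
integral itself; integrating over `s ∈ [0, 1]` costs a factor `exp (K² / n)`.
-/

section Calculus

lemma secondDeriv_nonpos_of_isLocalMax {φ φ' : ℝ → ℝ} {φ'' x : ℝ}
    (hφ : ∀ s, HasDerivAt φ (φ' s) s) (hφ' : HasDerivAt φ' φ'' x) (hmax : IsLocalMax φ x) :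
    φ'' ≤ 0 := by
  by_contra! hpos
  have hderiv : deriv φ = φ' := funext fun s => (hφ s).deriv
  have hmin : IsLocalMin φ x :=
    isLocalMin_of_deriv_deriv_pos (by rwa [hderiv, hφ'.deriv]) hmax.deriv_eq_zero
      (hφ x).continuousAt
  have hconst : φ =ᶠ[nhds x] fun _ => φ x := by
    filter_upwards [hmin, hmax] with s h₁ h₂ using le_antisymm h₂ h₁
  have hzero : deriv φ' x = 0 := by
    rw [← hderiv, hconst.deriv.deriv_eq]
    simp only [deriv_const', deriv_const]
  exact hpos.ne' (hφ'.deriv.symm.trans hzero)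

lemma norm_deriv_le_mul_norm_deriv {E F : Type*} [NormedAddCommGroup E] [NormedSpace ℝ E]
    [NormedAddCommGroup F] [NormedSpace ℝ F] {f : ℝ → E} {γ : ℝ → F} {f' : E} {γ' : F} {x K : ℝ}
    (hf : HasDerivAt f f' x) (hγ : HasDerivAt γ γ' x)
    (h : ∀ s, ‖f s - f x‖ ≤ K * ‖γ s - γ x‖) : ‖f'‖ ≤ K * ‖γ'‖ :=
  le_of_tendsto_of_tendsto' hf.tendsto_slope.norm (hγ.tendsto_slope.norm.const_mul K) fun s => by
    rw [slope_def_module, slope_def_module, norm_smul, norm_smul, mul_left_comm]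
    exact mul_le_mul_of_nonneg_left (h s) (norm_nonneg _)

lemma apply_one_le_of_deriv_le_mul {Φ Φ' : ℝ → ℝ} {c : ℝ} (hΦ : ∀ s, HasDerivAt Φ (Φ' s) s)
    (hle : ∀ s ∈ Set.Ioo (0 : ℝ) 1, Φ' s ≤ 2 * c * s * Φ s) : Φ 1 ≤ Real.exp c * Φ 0 := by
  have hd : ∀ s, HasDerivAt (fun s => Φ s * Real.exp (-(c * s ^ 2)))
      ((Φ' s - 2 * c * s * Φ s) * Real.exp (-(c * s ^ 2))) s := fun s => by
    refine ((hΦ s).mul ((hasDerivAt_pow 2 s).const_mul c).neg.exp).congr_deriv ?_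
    push_cast [Pi.neg_apply]
    ring
  have hanti : AntitoneOn (fun s => Φ s * Real.exp (-(c * s ^ 2))) (Set.Icc 0 1) := by
    refine antitoneOn_of_deriv_nonpos (convex_Icc 0 1)
      (fun s _ => (hd s).continuousAt.continuousWithinAt)
      (fun s _ => (hd s).differentiableAt.differentiableWithinAt) fun s hs => ?_
    rw [interior_Icc] at hs
    rw [(hd s).deriv]
    exact mul_nonpos_of_nonpos_of_nonneg (sub_nonpos.2 (hle s hs)) (Real.exp_pos _).le
  have h01 := hanti (Set.left_mem_Icc.2 zero_le_one) (Set.right_mem_Icc.2 zero_le_one) zero_le_one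
  rw [mul_comm, ← div_le_iff₀ (Real.exp_pos c), div_eq_mul_inv, ← Real.exp_neg]
  simpa using h01

variable {X : Type*} [TopologicalSpace X] [CompactSpace X] [MeasurableSpace X]
  [OpensMeasurableSpace X] (μ : Measure X) [IsFiniteMeasure μ]

lemma integrable_of_continuous {f : X → ℝ} (hf : Continuous f) : Integrable f μ :=
  hf.integrable_of_hasCompactSupport (HasCompactSupport.of_compactSpace f)

lemma eq_zero_of_integral_eq_zero [μ.IsOpenPosMeasure] {f : X → ℝ} (hf : Continuous f)
    (hf0 : 0 ≤ f) (hint : ∫ x, f x ∂μ = 0) : f = 0 :=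
  (Continuous.ae_eq_iff_eq μ hf continuous_const).1
    ((integral_eq_zero_iff_of_nonneg hf0 (integrable_of_continuous μ hf)).1 hint)

lemma hasDerivAt_integral_of_continuous {F F' : ℝ → X → ℝ} (hF : ∀ s, Continuous (F s))
    (hF' : Continuous (Function.uncurry F'))
    (hd : ∀ s x, HasDerivAt (fun s => F s x) (F' s x) s) (s : ℝ) :
    HasDerivAt (fun s => ∫ x, F s x ∂μ) (∫ x, F' s x ∂μ) s := by
  obtain ⟨C, hC⟩ := ((isCompact_closedBall s 1).prod
    (isCompact_univ (X := X))).exists_bound_of_continuousOn hF'.continuousOn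
  exact (hasDerivAt_integral_of_dominated_loc_of_deriv_le (bound := fun _ => C)
    (Metric.closedBall_mem_nhds s one_pos)
    (.of_forall fun t => (integrable_of_continuous μ (hF t)).aestronglyMeasurable)
    (integrable_of_continuous μ (hF s))
    (integrable_of_continuous μ (hF'.comp (Continuous.prodMk_right s))).aestronglyMeasurable
    (.of_forall fun x t ht => hC (t, x) ⟨ht, Set.mem_univ x⟩) (integrable_const C)
    (.of_forall fun x t _ => hd t x)).2

end Calculus

section CoordPoly

open MvPolynomial Module

lemma totalDegree_mkDerivation_le {σ R : Type*} [CommSemiring R] {f : σ → MvPolynomial σ R}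
    (hf : ∀ i, (f i).totalDegree ≤ 1) (p : MvPolynomial σ R) :
    (mkDerivation R f p).totalDegree ≤ p.totalDegree := by
  conv_lhs => rw [p.as_sum, map_sum]
  refine totalDegree_finsetSum_le fun d hd => ?_
  rw [mkDerivation_monomial]
  refine (totalDegree_smul_le _ _).trans (totalDegree_finsetSum_le fun i hi => ?_)
  have hdegree : (d - Finsupp.single i 1).degree + 1 = d.degree := by
    have hle : Finsupp.single i 1 ≤ d :=
      Finsupp.single_le_iff.2 (Nat.one_le_iff_ne_zero.2 (Finsupp.mem_support_iff.1 hi))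
    conv_rhs => rw [← tsub_add_cancel_of_le hle, map_add, Finsupp.degree_single]
  calc _ ≤ (monomial (d - Finsupp.single i 1) (d i : R)).totalDegree + (f i).totalDegree :=
        totalDegree_mul _ _
    _ ≤ (d - Finsupp.single i 1).degree + 1 :=
        add_le_add (totalDegree_monomial_le _ _) (hf i)
    _ = d.degree := hdegree
    _ ≤ p.totalDegree := le_totalDegree hd

/-- Polynomials in the coordinates of a finite-dimensional real vector space `V`, i.e. the
coordinate ring of `V` presented through the chosen basis `Module.finBasis ℝ V`. -/
abbrev CoordPoly (V : Type*) [AddCommGroup V] [Module ℝ V] [Module.Finite ℝ V] :=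
  MvPolynomial (Fin (finrank ℝ V)) ℝ

variable {V : Type*} [AddCommGroup V] [Module ℝ V] [Module.Finite ℝ V]

/-- Evaluation of a polynomial function at a point of the vector space. -/
noncomputable def evalAt (x : V) : CoordPoly V →ₐ[ℝ] ℝ :=
  aeval fun i => (finBasis ℝ V).repr x i

/-- A linear functional, as a polynomial of degree at most one. -/
noncomputable def ofDual : Dual ℝ V →ₗ[ℝ] CoordPoly V :=
  ∑ i, (Dual.eval ℝ V (finBasis ℝ V i)).smulRight (X i)

lemma ofDual_apply (φ : Dual ℝ V) : ofDual φ = ∑ i, φ (finBasis ℝ V i) • X i := by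
  simp only [ofDual, LinearMap.sum_apply, LinearMap.smulRight_apply, Dual.eval_apply]

lemma evalAt_X (x : V) (i : Fin (finrank ℝ V)) : evalAt x (X i) = (finBasis ℝ V).coord i x :=
  aeval_X _ i

lemma evalAt_ofDual (x : V) (φ : Dual ℝ V) : evalAt x (ofDual φ) = φ x := by
  conv_rhs => rw [← (finBasis ℝ V).sum_repr x]
  simp only [ofDual_apply, map_sum, map_smul, evalAt_X, Basis.coord_apply, smul_eq_mul, mul_comm]

lemma totalDegree_ofDual_le (φ : Dual ℝ V) : (ofDual φ).totalDegree ≤ 1 := by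
  rw [ofDual_apply]
  exact totalDegree_finsetSum_le fun i _ =>
    (totalDegree_smul_le _ _).trans (totalDegree_X (R := ℝ) i).le

end CoordPoly

section InvariantField

open MvPolynomial Module

variable {𝔸 : Type*} [Ring 𝔸] [Algebra ℝ 𝔸] [Module.Finite ℝ 𝔸]

/-- The vector field `x ↦ a * x` generating the flow `x ↦ exp (s • a) * x`, as a derivation of
polynomial functions. It is invariant under right translations. -/
noncomputable def invariantField :
    𝔸 →ₗ[ℝ] Derivation ℝ (CoordPoly 𝔸) (CoordPoly 𝔸) where
  toFun a := mkDerivation ℝ fun i => ofDual ((finBasis ℝ 𝔸).coord i ∘ₗ LinearMap.mulLeft ℝ a)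
  map_add' a b := derivation_ext fun i => by
    simp only [Derivation.add_apply, mkDerivation_X, ← map_add, ← LinearMap.comp_add]
    congr 2
    ext x
    simp only [LinearMap.mulLeft_apply, LinearMap.add_apply, add_mul]
  map_smul' c a := derivation_ext fun i => by
    simp only [RingHom.id_apply, Derivation.smul_apply, mkDerivation_X, ← map_smul,
      ← LinearMap.comp_smul]
    congr 2
    ext x
    simp only [LinearMap.mulLeft_apply, LinearMap.smul_apply, smul_mul_assoc]

lemma invariantField_X (a : 𝔸) (i : Fin (finrank ℝ 𝔸)) :
    invariantField a (X i) = ofDual ((finBasis ℝ 𝔸).coord i ∘ₗ LinearMap.mulLeft ℝ a) :=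
  mkDerivation_X _ _ i

lemma invariantField_ofDual (a : 𝔸) (φ : Dual ℝ 𝔸) :
    invariantField a (ofDual φ) = ofDual (φ ∘ₗ LinearMap.mulLeft ℝ a) := by
  rw [ofDual_apply, map_sum]
  simp only [Derivation.map_smul, invariantField_X, ← map_smul, ← map_sum]
  congr 1
  ext x
  conv_rhs => rw [LinearMap.comp_apply, ← (finBasis ℝ 𝔸).sum_repr (LinearMap.mulLeft ℝ a x)]
  simp only [LinearMap.sum_apply, LinearMap.smul_apply, LinearMap.comp_apply, Basis.coord_apply,
    map_sum, map_smul, smul_eq_mul, mul_comm]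

lemma invariantField_sum_smul_apply {κ : Type*} [Fintype κ] (c : κ → ℝ) (e : κ → 𝔸)
    (p : CoordPoly 𝔸) :
    invariantField (∑ k, c k • e k) p = ∑ k, c k • invariantField (e k) p := by
  simp only [map_sum, map_smul]
  exact (congrFun (map_sum (Derivation.coeFnAddMonoidHom (R := ℝ) (A := CoordPoly 𝔸)
    (M := CoordPoly 𝔸)) _ _) p).trans (Finset.sum_apply _ _ _)

lemma lie_invariantField (a b : 𝔸) :
    ⁅invariantField a, invariantField b⁆ = invariantField (b * a - a * b) :=
  derivation_ext fun i => by
    rw [Derivation.commutator_apply, map_sub, Derivation.sub_apply]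
    simp only [invariantField_X, invariantField_ofDual, LinearMap.comp_assoc,
      ← LinearMap.mulLeft_mul]

lemma totalDegree_invariantField_le (a : 𝔸) (p : CoordPoly 𝔸) :
    (invariantField a p).totalDegree ≤ p.totalDegree :=
  totalDegree_mkDerivation_le (fun _ => totalDegree_ofDual_le _) p

end InvariantField

section ExpFlow

open MvPolynomial Module

lemma continuous_evalAt {V : Type*} [NormedAddCommGroup V] [NormedSpace ℝ V]
    [FiniteDimensional ℝ V] (p : CoordPoly V) : Continuous fun x : V => evalAt x p := by
  have hcoord : Continuous fun (x : V) i => (finBasis ℝ V).coord i x :=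
    continuous_pi fun i => ((finBasis ℝ V).coord i).continuous_of_finiteDimensional
  exact (MvPolynomial.continuous_eval p).comp hcoord

variable {𝔸 : Type*} [NormedRing 𝔸] [NormedAlgebra ℝ 𝔸] [FiniteDimensional ℝ 𝔸]

lemma hasDerivAt_exp_smul_mul (a x : 𝔸) (s : ℝ) :
    HasDerivAt (fun s : ℝ => NormedSpace.exp (s • a) * x)
      (a * (NormedSpace.exp (s • a) * x)) s := by
  have : CompleteSpace 𝔸 := FiniteDimensional.complete ℝ 𝔸
  simpa only [mul_assoc] using (hasDerivAt_exp_smul_const' a s).mul_const x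

lemma hasDerivAt_evalAt_exp_smul_mul (a x : 𝔸) (p : CoordPoly 𝔸) (s : ℝ) :
    HasDerivAt (fun s : ℝ => evalAt (NormedSpace.exp (s • a) * x) p)
      (evalAt (NormedSpace.exp (s • a) * x) (invariantField a p)) s := by
  induction p using MvPolynomial.induction_on with
  | C r => simpa only [derivation_C, map_zero, algHom_C] using hasDerivAt_const s _
  | add p q hp hq =>
    simp only [map_add]
    exact hp.add hq
  | mul_X p i hp =>
    have hX := (((finBasis ℝ 𝔸).coord i).toContinuousLinearMap.hasFDerivAt).comp_hasDerivAt s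
      (hasDerivAt_exp_smul_mul a x s)
    simp only [map_mul, evalAt_X, Derivation.leibniz, invariantField_X, map_add, smul_eq_mul,
      evalAt_ofDual]
    refine (hp.mul hX).congr_deriv ?_
    simp only [Function.comp_apply, LinearMap.coe_toContinuousLinearMap', LinearMap.comp_apply,
      LinearMap.mulLeft_apply]
    ring

variable [StarRing 𝔸]

lemma continuous_evalAt_coe (p : CoordPoly 𝔸) : Continuous fun X : unitary 𝔸 => evalAt (X : 𝔸) p :=
  (continuous_evalAt p).comp continuous_subtype_val

variable [ContinuousStar 𝔸]

/-- The exponential of a skew-adjoint element, as a unitary. -/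
noncomputable def unitaryExp (a : skewAdjoint 𝔸) : unitary 𝔸 :=
  ⟨NormedSpace.exp (a : 𝔸), by
    have : CompleteSpace 𝔸 := FiniteDimensional.complete ℝ 𝔸
    let +nondep : NormedAlgebra ℚ 𝔸 := .restrictScalars ℚ ℝ 𝔸
    exact NormedSpace.exp_mem_unitary_of_mem_skewAdjoint a.2⟩

lemma unitaryExp_zero : unitaryExp (0 : skewAdjoint 𝔸) = 1 :=
  Subtype.ext (NormedSpace.exp_zero (𝔸 := 𝔸))

variable [StarModule ℝ 𝔸]

lemma unitaryExp_zero_smul_mul (a : skewAdjoint 𝔸) (X : unitary 𝔸) :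
    unitaryExp ((0 : ℝ) • a) * X = X := by
  rw [zero_smul, unitaryExp_zero, one_mul]

lemma continuous_unitaryExp_smul (a : skewAdjoint 𝔸) :
    Continuous fun s : ℝ => unitaryExp (s • a) :=
  continuous_induced_rng.2 <| continuous_iff_continuousAt.2 fun s => by
    have hd := (hasDerivAt_exp_smul_mul (a : 𝔸) 1 s).continuousAt
    simp only [mul_one] at hd
    exact hd

lemma hasDerivAt_evalAt_flow (a : skewAdjoint 𝔸) (X : unitary 𝔸) (p : CoordPoly 𝔸) (s : ℝ) :
    HasDerivAt (fun s : ℝ => evalAt ((unitaryExp (s • a) * X : unitary 𝔸) : 𝔸) p)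
      (evalAt ((unitaryExp (s • a) * X : unitary 𝔸) : 𝔸) (invariantField (a : 𝔸) p)) s :=
  hasDerivAt_evalAt_exp_smul_mul _ _ p s

lemma evalAt_unitaryExp_mul {a : skewAdjoint 𝔸} {p : CoordPoly 𝔸}
    (h : ∀ X : unitary 𝔸, evalAt (X : 𝔸) (invariantField (a : 𝔸) p) = 0) (X : unitary 𝔸) :
    evalAt ((unitaryExp a * X : unitary 𝔸) : 𝔸) p = evalAt (X : 𝔸) p := by
  have hd := hasDerivAt_evalAt_flow a X p
  have hconst := is_const_of_deriv_eq_zero (fun s => (hd s).differentiableAt)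
    (fun s => (hd s).deriv.trans (h _)) 1 0
  rwa [unitaryExp_zero_smul_mul, one_smul] at hconst

lemma evalAt_secondDeriv_le {a : skewAdjoint 𝔸} {X Y : unitary 𝔸} {p q : CoordPoly 𝔸}
    (h : ∀ s : ℝ, evalAt ((unitaryExp (s • a) * X : unitary 𝔸) : 𝔸) p -
        evalAt ((unitaryExp (s • a) * Y : unitary 𝔸) : 𝔸) q ≤
      evalAt (X : 𝔸) p - evalAt (Y : 𝔸) q) :
    evalAt (X : 𝔸) (invariantField (a : 𝔸) (invariantField (a : 𝔸) p)) ≤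
      evalAt (Y : 𝔸) (invariantField (a : 𝔸) (invariantField (a : 𝔸) q)) := by
  have hd := fun s => (hasDerivAt_evalAt_flow a X p s).sub (hasDerivAt_evalAt_flow a Y q s)
  have hd' := (hasDerivAt_evalAt_flow a X (invariantField (a : 𝔸) p) 0).sub
    (hasDerivAt_evalAt_flow a Y (invariantField (a : 𝔸) q) 0)
  have hmax := secondDeriv_nonpos_of_isLocalMax hd hd' <| .of_forall fun s => by
    simpa only [Pi.sub_apply, unitaryExp_zero_smul_mul] using h s
  simpa only [unitaryExp_zero_smul_mul, sub_nonpos] using hmax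

variable [CompactSpace (unitary 𝔸)] [MeasurableSpace (unitary 𝔸)] [BorelSpace (unitary 𝔸)]
  (μ : Measure (unitary 𝔸)) [IsFiniteMeasure μ] [μ.IsMulLeftInvariant]

lemma integral_flow_deriv_eq_zero (a : skewAdjoint 𝔸) {F F' : unitary 𝔸 → ℝ}
    (hF : Continuous F) (hF' : Continuous F')
    (hd : ∀ s X, HasDerivAt (fun s : ℝ => F (unitaryExp (s • a) * X))
      (F' (unitaryExp (s • a) * X)) s) : ∫ X, F' X ∂μ = 0 := by
  have hderiv := hasDerivAt_integral_of_continuous μ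
    (F := fun s X => F (unitaryExp (s • a) * X)) (F' := fun s X => F' (unitaryExp (s • a) * X))
    (fun s => hF.comp (continuous_const_mul _))
    (hF'.comp (((continuous_unitaryExp_smul a).comp continuous_fst).mul continuous_snd)) hd 0
  simp only [integral_mul_left_eq_self] at hderiv
  exact hderiv.unique (hasDerivAt_const _ _)

lemma integral_invariantField_add_mul_exp (a : skewAdjoint 𝔸) (p q : CoordPoly 𝔸) :
    ∫ X : unitary 𝔸, evalAt (X : 𝔸) (invariantField (a : 𝔸) p + p * invariantField (a : 𝔸) q) *
      Real.exp (evalAt (X : 𝔸) q) ∂μ = 0 := by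
  have hexp : Continuous fun X : unitary 𝔸 => Real.exp (evalAt (X : 𝔸) q) :=
    (continuous_evalAt_coe q).rexp
  refine integral_flow_deriv_eq_zero μ a
    (F := fun X => evalAt (X : 𝔸) p * Real.exp (evalAt (X : 𝔸) q))
    ((continuous_evalAt_coe p).mul hexp) ((continuous_evalAt_coe _).mul hexp) fun s X => ?_
  refine ((hasDerivAt_evalAt_flow a X p s).mul (hasDerivAt_evalAt_flow a X q s).exp).congr_deriv ?_
  simp only [map_add, map_mul]
  ring

end ExpFlow

section Laplacian

open MvPolynomial Module

variable {𝔸 κ : Type*} [Fintype κ]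

section Algebra

variable [Ring 𝔸] [Algebra ℝ 𝔸] [Module.Finite ℝ 𝔸] (e : κ → 𝔸)

/-- The Laplacian `∑ k, D (e k) ∘ D (e k)` of a finite family of invariant vector fields. -/
noncomputable def laplacian : CoordPoly 𝔸 →ₗ[ℝ] CoordPoly 𝔸 :=
  ∑ k, (invariantField (e k)).toLinearMap ∘ₗ (invariantField (e k)).toLinearMap

/-- The carré du champ `Γ(p, q)` of the Laplacian `laplacian e`. -/
noncomputable def carréDuChamp (p q : CoordPoly 𝔸) : CoordPoly 𝔸 :=
  ∑ k, invariantField (e k) p * invariantField (e k) q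

lemma laplacian_apply (p : CoordPoly 𝔸) :
    laplacian e p = ∑ k, invariantField (e k) (invariantField (e k) p) := by
  simp only [laplacian, LinearMap.sum_apply, LinearMap.comp_apply, Derivation.coeFn_coe]

lemma laplacian_mul (p q : CoordPoly 𝔸) :
    laplacian e (p * q) = 2 * carréDuChamp e p q + p * laplacian e q + q * laplacian e p := by
  simp only [laplacian_apply, carréDuChamp, Derivation.leibniz, smul_eq_mul, map_add,
    Finset.mul_sum, ← Finset.sum_add_distrib]
  exact Finset.sum_congr rfl fun _ _ => by ring

lemma laplacian_carréDuChamp_self {p : CoordPoly 𝔸} (hcomm : ∀ k,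
    invariantField (e k) (laplacian e p) = laplacian e (invariantField (e k) p)) :
    laplacian e (carréDuChamp e p p) =
      2 * (∑ k, carréDuChamp e (invariantField (e k) p) (invariantField (e k) p) +
        carréDuChamp e p (laplacian e p)) := by
  rw [carréDuChamp, map_sum, carréDuChamp, ← Finset.sum_add_distrib, Finset.mul_sum]
  exact Finset.sum_congr rfl fun k _ => by rw [laplacian_mul, hcomm]; ring

lemma laplacian_mem_restrictTotalDegree {m : ℕ} {p : CoordPoly 𝔸}
    (hp : p ∈ restrictTotalDegree _ ℝ m) : laplacian e p ∈ restrictTotalDegree _ ℝ m := by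
  rw [mem_restrictTotalDegree] at hp ⊢
  rw [laplacian_apply]
  exact totalDegree_finsetSum_le fun k _ => (totalDegree_invariantField_le _ _).trans
    ((totalDegree_invariantField_le _ _).trans hp)

variable {e}

lemma invariantField_laplacian {a : 𝔸} {c : κ → κ → ℝ} (hc : ∀ k l, c k l = -c l k)
    (hcomm : ∀ k, e k * a - a * e k = ∑ l, c k l • e l) (p : CoordPoly 𝔸) :
    invariantField a (laplacian e p) = laplacian e (invariantField a p) := by
  have hbracket : ∀ k q, invariantField a (invariantField (e k) q) =
      invariantField (e k) (invariantField a q) + ∑ l, c k l • invariantField (e l) q := by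
    intro k q
    rw [← sub_eq_iff_eq_add', ← Derivation.commutator_apply, lie_invariantField, hcomm,
      invariantField_sum_smul_apply]
  have hanti : ∑ k, ∑ l, c k l • invariantField (e l) (invariantField (e k) p) =
      -∑ k, ∑ l, c k l • invariantField (e k) (invariantField (e l) p) := by
    rw [Finset.sum_comm, ← Finset.sum_neg_distrib]
    refine Finset.sum_congr rfl fun k _ => ?_
    rw [← Finset.sum_neg_distrib]
    exact Finset.sum_congr rfl fun l _ => by rw [hc l k, neg_smul]
  simp only [laplacian_apply, map_sum, hbracket, map_add, Derivation.map_smul,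
    Finset.sum_add_distrib, hanti, add_neg_cancel_right]

end Algebra

variable [NormedRing 𝔸] [NormedAlgebra ℝ 𝔸] [FiniteDimensional ℝ 𝔸] [StarRing 𝔸]
  [StarModule ℝ 𝔸] [ContinuousStar 𝔸] {e : κ → 𝔸}

lemma evalAt_laplacian_le (he : ∀ k, e k ∈ skewAdjoint 𝔸) {X Y : unitary 𝔸} {p q : CoordPoly 𝔸}
    (h : ∀ k (s : ℝ), evalAt ((unitaryExp (s • ⟨e k, he k⟩) * X : unitary 𝔸) : 𝔸) p -
        evalAt ((unitaryExp (s • ⟨e k, he k⟩) * Y : unitary 𝔸) : 𝔸) q ≤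
      evalAt (X : 𝔸) p - evalAt (Y : 𝔸) q) :
    evalAt (X : 𝔸) (laplacian e p) ≤ evalAt (Y : 𝔸) (laplacian e q) := by
  simp only [laplacian_apply, map_sum]
  exact Finset.sum_le_sum fun k _ => evalAt_secondDeriv_le (a := ⟨e k, he k⟩) (h k)

variable [CompactSpace (unitary 𝔸)] [MeasurableSpace (unitary 𝔸)] [BorelSpace (unitary 𝔸)]
  (μ : Measure (unitary 𝔸)) [IsFiniteMeasure μ] [μ.IsMulLeftInvariant]

lemma integral_laplacian_mul_exp (he : ∀ k, e k ∈ skewAdjoint 𝔸) (p q : CoordPoly 𝔸) :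
    ∫ X : unitary 𝔸, evalAt (X : 𝔸) (laplacian e p) * Real.exp (evalAt (X : 𝔸) q) ∂μ =
      -∫ X : unitary 𝔸, evalAt (X : 𝔸) (carréDuChamp e p q) *
        Real.exp (evalAt (X : 𝔸) q) ∂μ := by
  have hint : ∀ r : CoordPoly 𝔸, Integrable
      (fun X : unitary 𝔸 => evalAt (X : 𝔸) r * Real.exp (evalAt (X : 𝔸) q)) μ := fun r =>
    integrable_of_continuous μ ((continuous_evalAt_coe r).mul (continuous_evalAt_coe q).rexp)
  rw [eq_neg_iff_add_eq_zero, ← integral_add (hint _) (hint _)]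
  simp only [← add_mul, ← map_add, laplacian_apply, carréDuChamp, ← Finset.sum_add_distrib]
  simp only [map_sum, Finset.sum_mul]
  rw [integral_finsetSum _ fun k _ => hint _]
  exact Finset.sum_eq_zero fun k _ => integral_invariantField_add_mul_exp μ ⟨e k, he k⟩ _ q

lemma integral_laplacian_eq_zero (he : ∀ k, e k ∈ skewAdjoint 𝔸) (p : CoordPoly 𝔸) :
    ∫ X : unitary 𝔸, evalAt (X : 𝔸) (laplacian e p) ∂μ = 0 := by
  simpa only [carréDuChamp, map_zero, mul_zero, Finset.sum_const_zero, Real.exp_zero, mul_one,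
    integral_zero, neg_zero] using integral_laplacian_mul_exp μ he p 0

lemma two_mul_integral_carréDuChamp (he : ∀ k, e k ∈ skewAdjoint 𝔸) (p q : CoordPoly 𝔸) :
    2 * ∫ X : unitary 𝔸, evalAt (X : 𝔸) (carréDuChamp e p q) ∂μ =
      -∫ X : unitary 𝔸, evalAt (X : 𝔸) (p * laplacian e q + q * laplacian e p) ∂μ := by
  have hint := fun r : CoordPoly 𝔸 => integrable_of_continuous μ (continuous_evalAt_coe r)
  rw [eq_neg_iff_add_eq_zero, ← integral_const_mul,
    ← integral_add ((hint _).const_mul 2) (hint _), ← integral_laplacian_eq_zero μ he (p * q)]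
  refine integral_congr_ae (.of_forall fun X => ?_)
  simp only [laplacian_mul, map_add, map_mul, map_ofNat]
  ring

include μ in
lemma evalAt_invariantField_eq_zero_of_laplacian_eq_zero [μ.IsOpenPosMeasure]
    (he : ∀ k, e k ∈ skewAdjoint 𝔸) {p : CoordPoly 𝔸}
    (hp : ∀ X : unitary 𝔸, evalAt (X : 𝔸) (laplacian e p) = 0) (k : κ) (X : unitary 𝔸) :
    evalAt (X : 𝔸) (invariantField (e k) p) = 0 := by
  have hsq : ∀ X : unitary 𝔸, evalAt (X : 𝔸) (carréDuChamp e p p) =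
      ∑ k, evalAt (X : 𝔸) (invariantField (e k) p) ^ 2 := fun X => by
    simp only [carréDuChamp, map_sum, map_mul, sq]
  have hint := two_mul_integral_carréDuChamp μ he p p
  simp only [map_add, map_mul, hp, mul_zero, add_zero, integral_zero, neg_zero,
    mul_eq_zero, OfNat.ofNat_ne_zero, false_or] at hint
  have hzero := congrFun (eq_zero_of_integral_eq_zero μ (continuous_evalAt_coe _)
    (fun Y => by rw [hsq]; positivity) hint) X
  rw [hsq] at hzero
  exact pow_eq_zero_iff two_ne_zero |>.1
    ((Finset.sum_eq_zero_iff_of_nonneg fun _ _ => sq_nonneg _).1 hzero k (Finset.mem_univ k))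

include μ in
lemma evalAt_laplacian_eq_zero_of_laplacian_laplacian [μ.IsOpenPosMeasure]
    (he : ∀ k, e k ∈ skewAdjoint 𝔸) {p : CoordPoly 𝔸}
    (hp : ∀ X : unitary 𝔸, evalAt (X : 𝔸) (laplacian e (laplacian e p)) = 0)
    (X : unitary 𝔸) : evalAt (X : 𝔸) (laplacian e p) = 0 := by
  have hint := two_mul_integral_carréDuChamp μ he p (laplacian e p)
  simp only [carréDuChamp, map_sum, map_add, map_mul, hp,
    evalAt_invariantField_eq_zero_of_laplacian_eq_zero μ he hp, mul_zero, Finset.sum_const_zero,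
    zero_add, integral_zero, zero_eq_neg] at hint
  exact mul_self_eq_zero.1 (congrFun (eq_zero_of_integral_eq_zero μ
    ((continuous_evalAt_coe _).mul (continuous_evalAt_coe _)) (fun Y => mul_self_nonneg _) hint) X)

include μ in
lemma evalAt_laplacian_eq_zero_of_pow [μ.IsOpenPosMeasure] (he : ∀ k, e k ∈ skewAdjoint 𝔸) {m : ℕ}
    {p : CoordPoly 𝔸} (hp : ∀ X : unitary 𝔸, evalAt (X : 𝔸) ((laplacian e ^ (m + 1)) p) = 0) :
    ∀ X : unitary 𝔸, evalAt (X : 𝔸) (laplacian e p) = 0 := by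
  induction m with
  | zero => simpa only [zero_add, pow_one] using hp
  | succ m ih =>
    refine ih ?_
    simp only [pow_succ', Module.End.mul_apply] at hp ⊢
    exact evalAt_laplacian_eq_zero_of_laplacian_laplacian μ he hp

-- Fitting's lemma for the Laplacian on the finite-dimensional space of polynomials of bounded
-- degree; the nilpotent part is harmonic on the unitary group.
include μ in
lemma exists_eq_sub_laplacian [μ.IsOpenPosMeasure] (he : ∀ k, e k ∈ skewAdjoint 𝔸)
    (f : CoordPoly 𝔸) :
    ∃ h u : CoordPoly 𝔸, f = h - laplacian e u ∧
      ∀ k (X : unitary 𝔸), evalAt (X : 𝔸) (invariantField (e k) h) = 0 := by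
  set V := restrictTotalDegree (Fin (finrank ℝ 𝔸)) ℝ f.totalDegree
  have hf : f ∈ V := (mem_restrictTotalDegree _ _ _).2 le_rfl
  set T : Module.End ℝ V :=
    (laplacian e).restrict fun _ hp => laplacian_mem_restrictTotalDegree e hp
  have hT : ∀ (m : ℕ) (p : V), ((T ^ m) p : CoordPoly 𝔸) = (laplacian e ^ m) p := fun m p => by
    rw [Module.End.pow_restrict, LinearMap.coe_restrict_apply]
  obtain ⟨m, hm, hm0⟩ :=
    (T.eventually_isCompl_ker_pow_range_pow.and (Filter.eventually_ge_atTop 1)).exists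
  obtain ⟨m, rfl⟩ := Nat.exists_eq_add_of_le' hm0
  obtain ⟨h, hh, _, ⟨w, rfl⟩, hsum⟩ := Submodule.mem_sup.1
    (hm.sup_eq_top.symm ▸ Submodule.mem_top : (⟨f, hf⟩ : V) ∈ _)
  refine ⟨h, -(laplacian e ^ m) w, ?_, evalAt_invariantField_eq_zero_of_laplacian_eq_zero μ he
    (evalAt_laplacian_eq_zero_of_pow μ he (m := m) fun X => ?_)⟩
  · rw [map_neg, sub_neg_eq_add, ← Module.End.mul_apply, ← pow_succ', ← hT, ← Submodule.coe_add,
      hsum]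
  · rw [← hT, LinearMap.mem_ker.1 hh, Submodule.coe_zero, map_zero]

lemma integral_exp_le_exp_mul_integral_exp (he : ∀ k, e k ∈ skewAdjoint 𝔸) {h u : CoordPoly 𝔸}
    {c : ℝ} (hh : ∀ k (X : unitary 𝔸), evalAt (X : 𝔸) (invariantField (e k) h) = 0)
    (hΓ : ∀ X : unitary 𝔸, evalAt (X : 𝔸) (carréDuChamp e u (h - laplacian e u)) ≤ 2 * c) :
    ∫ X : unitary 𝔸, Real.exp (evalAt (X : 𝔸) (h - laplacian e u)) ∂μ ≤
      Real.exp c * ∫ X : unitary 𝔸, Real.exp (evalAt (X : 𝔸) h) ∂μ := by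
  set F : ℝ → CoordPoly 𝔸 := fun s => h - s • laplacian e u
  have hcont : Continuous fun q : ℝ × unitary 𝔸 => evalAt (q.2 : 𝔸) (F q.1) := by
    simp only [F, map_sub, map_smul]
    exact ((continuous_evalAt_coe h).comp continuous_snd).sub
      (continuous_fst.smul ((continuous_evalAt_coe _).comp continuous_snd))
  have hd : ∀ s, HasDerivAt (fun s => ∫ X : unitary 𝔸, Real.exp (evalAt (X : 𝔸) (F s)) ∂μ)
      (∫ X : unitary 𝔸, -(evalAt (X : 𝔸) (laplacian e u) * Real.exp (evalAt (X : 𝔸) (F s))) ∂μ)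
      s := by
    refine hasDerivAt_integral_of_continuous μ (fun s => (continuous_evalAt_coe _).rexp)
      (((continuous_evalAt_coe _).comp continuous_snd).mul hcont.rexp).neg fun s X => ?_
    simp only [F, map_sub, map_smul, smul_eq_mul]
    refine (((hasDerivAt_id s).mul_const _).const_sub _).exp.congr_deriv ?_
    simp only [id_eq]
    ring
  have hΓF : ∀ s (X : unitary 𝔸), evalAt (X : 𝔸) (carréDuChamp e u (F s)) =
      s * evalAt (X : 𝔸) (carréDuChamp e u (h - laplacian e u)) := fun s X => by
    simp only [F, carréDuChamp, map_sum, map_mul, map_sub, Derivation.map_smul, map_smul, hh,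
      Finset.mul_sum, smul_eq_mul]
    exact Finset.sum_congr rfl fun _ _ => by ring
  have hle := apply_one_le_of_deriv_le_mul (c := c) hd fun s hs => by
    rw [integral_neg, integral_laplacian_mul_exp μ he, neg_neg, ← integral_const_mul]
    refine integral_mono (integrable_of_continuous μ ((continuous_evalAt_coe _).mul
      (continuous_evalAt_coe _).rexp)) (integrable_of_continuous μ
      ((continuous_evalAt_coe _).rexp.const_mul _)) fun X => ?_
    refine mul_le_mul_of_nonneg_right ?_ (Real.exp_pos _).le
    rw [hΓF, mul_comm _ s]
    exact mul_le_mul_of_nonneg_left (hΓ X) hs.1.le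
  simpa only [F, one_smul, zero_smul, sub_zero] using hle

end Laplacian

section FrobeniusInner

open scoped Matrix.Norms.Frobenius Matrix

variable {n : Type*} [Fintype n]

/-- The real inner product `⟪A, B⟫ = Re tr (Aᴴ B)`, which induces the Frobenius norm. -/
noncomputable instance frobeniusInnerProductSpace : InnerProductSpace ℝ (Matrix n n ℂ) where
  inner A B := (Aᴴ * B).trace.re
  norm_sq_eq_re_inner A := by
    rw [Matrix.frobenius_norm_def, ← Real.sqrt_eq_rpow, Real.sq_sqrt (by positivity),
      Finset.sum_comm]
    simp only [Real.rpow_ofNat, Matrix.trace, Matrix.diag_apply, Matrix.mul_apply,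
      Matrix.conjTranspose_apply, Complex.star_def, ← Complex.normSq_eq_conj_mul_self,
      Complex.re_sum, Complex.ofReal_re, Complex.normSq_eq_norm_sq, RCLike.re_to_real]
  conj_inner_symm A B := by
    rw [conj_trivial, ← Complex.conj_re, ← Complex.star_def, ← Matrix.trace_conjTranspose,
      Matrix.conjTranspose_mul, Matrix.conjTranspose_conjTranspose]
  add_left A B C := by
    rw [Matrix.conjTranspose_add, add_mul, Matrix.trace_add, Complex.add_re]
  smul_left A B r := by
    rw [Matrix.conjTranspose_smul, star_trivial, smul_mul_assoc, Matrix.trace_smul,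
      Complex.smul_re, smul_eq_mul, conj_trivial]

lemma real_inner_eq_re_trace (A B : Matrix n n ℂ) : inner ℝ A B = (Aᴴ * B).trace.re := rfl

lemma real_inner_eq_neg_re_trace {A : Matrix n n ℂ} (hA : A ∈ skewAdjoint (Matrix n n ℂ))
    (B : Matrix n n ℂ) : inner ℝ A B = -(A * B).trace.re := by
  rw [real_inner_eq_re_trace, ← Matrix.star_eq_conjTranspose, skewAdjoint.mem_iff.1 hA, neg_mul,
    Matrix.trace_neg, Complex.neg_re]

lemma real_inner_commutator {A : Matrix n n ℂ} (hA : A ∈ skewAdjoint (Matrix n n ℂ))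
    (B C : Matrix n n ℂ) : inner ℝ (B * A - A * B) C = -inner ℝ B (C * A - A * C) := by
  rw [skewAdjoint.mem_iff, Matrix.star_eq_conjTranspose] at hA
  have htrace : (A * Bᴴ * C).trace = (Bᴴ * (C * A)).trace := by
    rw [mul_assoc, Matrix.trace_mul_comm, mul_assoc]
  simp only [real_inner_eq_re_trace, Matrix.conjTranspose_sub, Matrix.conjTranspose_mul, hA,
    neg_mul, mul_neg, sub_mul, mul_sub, Matrix.trace_sub, Matrix.trace_neg, Complex.sub_re,
    Complex.neg_re, htrace, ← mul_assoc]
  ring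

lemma trace_mul_eq_neg_real_inner {A B : Matrix n n ℂ} (hA : A ∈ skewAdjoint (Matrix n n ℂ))
    (hB : B ∈ skewAdjoint (Matrix n n ℂ)) : (A * B).trace = ((-inner ℝ B A : ℝ) : ℂ) := by
  have hreal : star (A * B).trace = (A * B).trace := by
    rw [skewAdjoint.mem_iff, Matrix.star_eq_conjTranspose] at hA hB
    rw [← Matrix.trace_conjTranspose, Matrix.conjTranspose_mul, hA, hB, neg_mul_neg,
      Matrix.trace_mul_comm]
  rw [real_inner_eq_neg_re_trace hB, neg_neg, Matrix.trace_mul_comm B A]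
  exact (Complex.conj_eq_iff_re.1 hreal).symm

variable [DecidableEq n]

lemma norm_mul_unitary (A : Matrix n n ℂ) (U : unitary (Matrix n n ℂ)) :
    ‖A * (U : Matrix n n ℂ)‖ = ‖A‖ := by
  rw [← sq_eq_sq₀ (norm_nonneg _) (norm_nonneg _), ← real_inner_self_eq_norm_sq,
    ← real_inner_self_eq_norm_sq, real_inner_eq_re_trace, real_inner_eq_re_trace,
    Matrix.conjTranspose_mul, ← mul_assoc, Matrix.trace_mul_comm, ← mul_assoc, ← mul_assoc,
    ← Matrix.star_eq_conjTranspose (U : Matrix n n ℂ), Unitary.mul_star_self_of_mem U.2, one_mul]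

lemma norm_unitary_mul (U : unitary (Matrix n n ℂ)) (A : Matrix n n ℂ) :
    ‖(U : Matrix n n ℂ) * A‖ = ‖A‖ := by
  rw [← Matrix.frobenius_norm_conjTranspose, Matrix.conjTranspose_mul,
    ← Matrix.star_eq_conjTranspose (U : Matrix n n ℂ), ← Unitary.coe_star, norm_mul_unitary,
    Matrix.frobenius_norm_conjTranspose]

lemma norm_unitary_sq (U : unitary (Matrix n n ℂ)) :
    ‖(U : Matrix n n ℂ)‖ ^ 2 = Fintype.card n := by
  rw [← real_inner_self_eq_norm_sq, real_inner_eq_re_trace, ← Matrix.star_eq_conjTranspose,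
    Unitary.star_mul_self_of_mem U.2, Matrix.trace_one, Complex.natCast_re]

end FrobeniusInner

section SpecialUnitaryLie

open scoped Matrix.Norms.Frobenius Matrix

variable (n : Type*) [Fintype n]

/-- The Lie algebra `𝔰𝔲(n)` of traceless skew-Hermitian matrices. -/
noncomputable def specialUnitaryLie : Submodule ℝ (Matrix n n ℂ) :=
  skewAdjoint.submodule ℝ (Matrix n n ℂ) ⊓ LinearMap.ker (Matrix.traceLinearMap n ℝ ℂ)

variable {n}

lemma mem_specialUnitaryLie {A : Matrix n n ℂ} :
    A ∈ specialUnitaryLie n ↔ A ∈ skewAdjoint (Matrix n n ℂ) ∧ A.trace = 0 := Iff.rfl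

lemma commutator_mem_specialUnitaryLie {A B : Matrix n n ℂ}
    (hA : A ∈ skewAdjoint (Matrix n n ℂ)) (hB : B ∈ skewAdjoint (Matrix n n ℂ)) :
    A * B - B * A ∈ specialUnitaryLie n := by
  refine mem_specialUnitaryLie.2 ⟨?_, by rw [Matrix.trace_sub, Matrix.trace_mul_comm, sub_self]⟩
  rw [skewAdjoint.mem_iff] at hA hB ⊢
  rw [star_sub, star_mul, star_mul, hA, hB, neg_mul_neg, neg_mul_neg, neg_sub]

lemma exists_specialUnitaryLie_decomposition [DecidableEq n] [Nonempty n] (M : Matrix n n ℂ) :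
    ∃ A ∈ specialUnitaryLie n, ∃ B ∈ specialUnitaryLie n,
      M = A + Complex.I • B + (M.trace / Fintype.card n) • 1 := by
  set M₀ := M - (M.trace / Fintype.card n) • 1
  have hM₀ : M₀.trace = 0 := by
    rw [Matrix.trace_sub, Matrix.trace_smul, Matrix.trace_one, smul_eq_mul,
      div_mul_cancel₀ _ (Nat.cast_ne_zero.2 Fintype.card_ne_zero), sub_self]
  have hskew : ∀ z : ℂ, (2⁻¹ : ℂ) • (z • M₀ - star (z • M₀)) ∈ specialUnitaryLie n := fun z => by
    refine mem_specialUnitaryLie.2 ⟨skewAdjoint.mem_iff.2 ?_, ?_⟩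
    · rw [star_smul, star_sub, star_star, ← smul_neg, neg_sub]
      simp
    · rw [Matrix.star_eq_conjTranspose, Matrix.trace_smul, Matrix.trace_sub,
        Matrix.trace_conjTranspose, Matrix.trace_smul, hM₀, smul_zero, star_zero, sub_zero,
        smul_zero]
  refine ⟨_, hskew 1, _, hskew (-Complex.I), ?_⟩
  rw [← sub_eq_iff_eq_add]
  change M₀ = _
  simp only [one_smul, star_smul, star_neg, Complex.star_def, Complex.conj_I, neg_neg, smul_smul,
    smul_sub, ← mul_assoc, neg_smul, smul_neg]
  rw [mul_right_comm, Complex.I_mul_I]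
  module

variable {κ : Type*} [Fintype κ] (b : OrthonormalBasis κ ℝ (specialUnitaryLie n))

lemma basis_mem_skewAdjoint (k : κ) : (b k : Matrix n n ℂ) ∈ skewAdjoint (Matrix n n ℂ) :=
  (b k).2.1

lemma trace_basis (k : κ) : (b k : Matrix n n ℂ).trace = 0 :=
  (b k).2.2

lemma sum_inner_smul_basis {A : Matrix n n ℂ} (hA : A ∈ specialUnitaryLie n) :
    ∑ k, inner ℝ (b k : Matrix n n ℂ) A • (b k : Matrix n n ℂ) = A := by
  simpa only [Submodule.coe_inner, Submodule.coe_sum, Submodule.coe_smul] using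
    congrArg Subtype.val (b.sum_repr' ⟨A, hA⟩)

lemma sum_inner_sq_basis {A : Matrix n n ℂ} (hA : A ∈ specialUnitaryLie n) :
    ∑ k, inner ℝ (b k : Matrix n n ℂ) A ^ 2 = ‖A‖ ^ 2 := by
  simpa only [Submodule.coe_inner, Real.norm_eq_abs, sq_abs, Submodule.coe_norm] using
    b.sum_sq_norm_inner_right ⟨A, hA⟩

variable [DecidableEq n] [Nonempty n]

lemma sum_trace_mul_basis_smul_basis (M : Matrix n n ℂ) :
    ∑ k, (M * b k).trace • (b k : Matrix n n ℂ) = (M.trace / Fintype.card n) • 1 - M := by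
  have hLie : ∀ A ∈ specialUnitaryLie n, ∑ k, (A * b k).trace • (b k : Matrix n n ℂ) = -A := by
    intro A hA
    simp only [trace_mul_eq_neg_real_inner hA.1 (basis_mem_skewAdjoint b _), Complex.coe_smul,
      neg_smul, Finset.sum_neg_distrib, sum_inner_smul_basis b hA]
  obtain ⟨A, hA, B, hB, hM⟩ := exists_specialUnitaryLie_decomposition M
  have htrace : ∀ k, (M * b k).trace = (A * b k).trace + Complex.I * (B * b k).trace := fun k => by
    conv_lhs => rw [hM]
    simp only [add_mul, smul_mul_assoc, one_mul, Matrix.trace_add, Matrix.trace_smul, smul_eq_mul,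
      trace_basis, mul_zero, add_zero]
  simp only [htrace, add_smul, mul_smul, Finset.sum_add_distrib, ← Finset.smul_sum, hLie A hA,
    hLie B hB]
  rw [smul_neg, ← neg_add, eq_sub_of_add_eq hM.symm, neg_sub]

lemma sum_basis_apply_mul_basis_apply (i p q j : n) :
    ∑ k, (b k : Matrix n n ℂ) i p * (b k : Matrix n n ℂ) q j =
      (if i = p then 1 / (Fintype.card n : ℂ) else 0) * (if q = j then 1 else 0) -
        if p = q ∧ i = j then 1 else 0 := by
  have h := congrFun₂ (sum_trace_mul_basis_smul_basis b (Matrix.single p i 1)) q j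
  have htrace : (Matrix.single p i (1 : ℂ)).trace = if i = p then 1 else 0 := by
    rw [← mul_one (Matrix.single p i (1 : ℂ)), Matrix.trace_single_mul, one_smul,
      Matrix.one_apply]
  simpa only [Matrix.sum_apply, Matrix.smul_apply, Matrix.sub_apply, Matrix.trace_single_mul,
    Matrix.single_apply, Matrix.one_apply, htrace, ite_div, zero_div, smul_eq_mul, one_mul,
    one_smul] using h

lemma sum_basis_mul_mul_basis (M : Matrix n n ℂ) :
    ∑ k, (b k : Matrix n n ℂ) * M * b k = (1 / (Fintype.card n : ℂ)) • M - M.trace • 1 := by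
  ext i j
  simp only [Matrix.sum_apply, Matrix.mul_apply, Finset.sum_mul]
  calc _ = ∑ q, ∑ p, M p q * ∑ k, (b k : Matrix n n ℂ) i p * (b k : Matrix n n ℂ) q j := by
        rw [Finset.sum_comm]
        refine Finset.sum_congr rfl fun q _ => ?_
        rw [Finset.sum_comm]
        refine Finset.sum_congr rfl fun p _ => ?_
        rw [Finset.mul_sum]
        exact Finset.sum_congr rfl fun k _ => by ring
    _ = _ := by
        simp only [sum_basis_apply_mul_basis_apply]
        by_cases hij : i = j <;>
          simp [mul_sub, Finset.sum_sub_distrib, hij, Matrix.trace, mul_comm]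

lemma sum_norm_commutator_sq {A : Matrix n n ℂ} (hA : A ∈ specialUnitaryLie n) :
    ∑ k, ‖(b k : Matrix n n ℂ) * A - A * b k‖ ^ 2 = 2 * Fintype.card n * ‖A‖ ^ 2 := by
  have hnorm : ∀ k, ‖(b k : Matrix n n ℂ) * A - A * b k‖ ^ 2 =
      2 * ((b k * 1 * b k) * (A * A)).trace.re - 2 * ((b k * A * b k) * A).trace.re := fun k => by
    have hskew := (commutator_mem_specialUnitaryLie (basis_mem_skewAdjoint b k) hA.1).1
    rw [← real_inner_self_eq_norm_sq, real_inner_eq_neg_re_trace hskew]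
    have h₁ : (A * b k * (A * b k)).trace = (b k * A * b k * A).trace := by
      rw [mul_assoc, Matrix.trace_mul_comm]
      simp only [mul_assoc]
    have h₂ : (A * b k * (b k * A)).trace = (b k * b k * (A * A)).trace := by
      rw [mul_assoc, Matrix.trace_mul_comm]
      simp only [mul_assoc]
    have h₃ : (b k * A * (A * b k)).trace = (b k * b k * (A * A)).trace := by
      rw [← mul_assoc, Matrix.trace_mul_comm]
      simp only [mul_assoc]
    simp only [mul_sub, sub_mul, Matrix.trace_sub, Complex.sub_re, h₁, h₂, h₃, mul_one]
    rw [← mul_assoc (b k * A : Matrix n n ℂ)]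
    ring
  have hnormA : ‖A‖ ^ 2 = -(A * A).trace.re := by
    rw [← real_inner_self_eq_norm_sq, real_inner_eq_neg_re_trace hA.1]
  have htrace : A.trace = 0 := hA.2
  simp only [hnorm, Finset.sum_sub_distrib, ← Finset.mul_sum, ← Complex.re_sum,
    ← Matrix.trace_sum, ← Finset.sum_mul, sum_basis_mul_mul_basis, htrace, hnormA, zero_smul,
    sub_zero, sub_mul, smul_mul_assoc, one_mul, Matrix.trace_sub, Matrix.trace_smul,
    Matrix.trace_one, smul_eq_mul, Complex.sub_re, Complex.mul_re, Complex.natCast_re,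
    Complex.natCast_im, zero_mul]
  ring

end SpecialUnitaryLie

section UnitaryMatrix

open scoped Matrix

variable {n : Type*} [Fintype n] [DecidableEq n]

open scoped Matrix.Norms.L2Operator in
lemma exists_isHermitian_exp_I_smul_eq (U : unitary (Matrix n n ℂ)) :
    ∃ H : Matrix n n ℂ, H.IsHermitian ∧ (U : Matrix n n ℂ) = NormedSpace.exp (Complex.I • H) := by
  have hcont : ContinuousOn (Complex.ofReal ∘ Complex.arg) (spectrum ℂ (U : Matrix n n ℂ)) :=
    (Matrix.finite_spectrum _).continuousOn _
  refine ⟨cfc (Complex.ofReal ∘ Complex.arg) (U : Matrix n n ℂ), IsSelfAdjoint.cfc_arg _, ?_⟩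
  rw [← CFC.exp_eq_normedSpace_exp (𝕜 := ℂ), ← cfc_comp_smul .., ← cfc_comp' ..]
  conv_lhs => rw [← cfc_id' ℂ (U : Matrix n n ℂ)]
  refine cfc_congr fun z hz => ?_
  have hnorm : ‖z‖ = 1 := spectrum.norm_eq_one_of_unitary U.2 hz
  rw [smul_eq_mul, mul_comm, ← Complex.exp_eq_exp_ℂ, Function.comp_apply]
  simpa only [hnorm, Complex.ofReal_one, one_mul] using (Complex.norm_mul_exp_arg_mul_I z).symm

lemma exp_unitary_mul_mul_star (V : unitary (Matrix n n ℂ)) (A : Matrix n n ℂ) :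
    NormedSpace.exp ((V : Matrix n n ℂ) * A * star (V : Matrix n n ℂ)) =
      V * NormedSpace.exp A * star (V : Matrix n n ℂ) :=
  Matrix.exp_units_conj (Unitary.toUnits V) A

lemma exp_diagonal_ofReal_mul_I (θ : n → ℝ) :
    NormedSpace.exp (Matrix.diagonal fun i => (θ i : ℂ) * Complex.I) =
      Matrix.diagonal fun i => Complex.exp (θ i * Complex.I) := by
  rw [Matrix.exp_diagonal]
  congr 1
  ext i
  rw [Pi.coe_exp, Complex.exp_eq_exp_ℂ]

lemma exists_eq_unitary_mul_diagonal_mul_star (U : unitary (Matrix n n ℂ)) :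
    ∃ (V : unitary (Matrix n n ℂ)) (θ : n → ℝ), (U : Matrix n n ℂ) =
      V * (Matrix.diagonal fun i => Complex.exp (θ i * Complex.I)) * star (V : Matrix n n ℂ) := by
  obtain ⟨H, hH, hU⟩ := exists_isHermitian_exp_I_smul_eq U
  refine ⟨hH.eigenvectorUnitary, hH.eigenvalues, ?_⟩
  rw [← exp_diagonal_ofReal_mul_I, ← exp_unitary_mul_mul_star, hU]
  congr 1
  conv_lhs => rw [hH.spectral_theorem]
  rw [Unitary.conjStarAlgAut_apply, ← smul_mul_assoc, ← mul_smul_comm, ← Matrix.diagonal_smul]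
  congr 3
  ext i
  exact mul_comm _ _

omit [DecidableEq n] in
lemma exists_phases_abs_sum_le_pi [Nonempty n] (θ : n → ℝ) :
    ∃ θ' : n → ℝ, |∑ i, θ' i| ≤ Real.pi ∧
      ∀ i, Complex.exp (θ' i * Complex.I) = Complex.exp (θ i * Complex.I) := by
  classical
  set m : ℤ := round ((∑ i, θ i) / (2 * Real.pi))
  refine ⟨θ - Pi.single (Classical.arbitrary n) (m * (2 * Real.pi)), ?_, fun i => ?_⟩
  · have hround := abs_sub_round ((∑ i, θ i) / (2 * Real.pi))
    have hpos := Real.two_pi_pos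
    simp only [Pi.sub_apply, Finset.sum_sub_distrib, Finset.sum_pi_single', Finset.mem_univ,
      if_true]
    rw [div_sub' hpos.ne', abs_div, abs_of_pos hpos, div_le_iff₀ hpos] at hround
    rw [mul_comm (m : ℝ)]
    linarith
  · rw [Pi.sub_apply, Pi.single_apply]
    split_ifs
    · push_cast
      rw [sub_mul, mul_assoc (m : ℂ), Complex.exp_sub, Complex.exp_int_mul_two_pi_mul_I, div_one]
    · rw [sub_zero]

end UnitaryMatrix

section UnitaryMatrixExp

open scoped Matrix.Norms.Frobenius Matrix

variable {n : Type*} [Fintype n] [DecidableEq n]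

lemma unitary_mul_diagonal_mul_star_mem_specialUnitaryLie (V : unitary (Matrix n n ℂ)) {θ : n → ℝ}
    (hθ : ∑ i, θ i = 0) :
    V * (Matrix.diagonal fun i => (θ i : ℂ) * Complex.I) * star (V : Matrix n n ℂ) ∈
      specialUnitaryLie n := by
  refine mem_specialUnitaryLie.2 ⟨skewAdjoint.mem_iff.2 ?_, ?_⟩
  · have hskew : star (Matrix.diagonal fun i => (θ i : ℂ) * Complex.I) =
        -Matrix.diagonal fun i => (θ i : ℂ) * Complex.I := by
      rw [Matrix.star_eq_conjTranspose, Matrix.diagonal_conjTranspose, Matrix.diagonal_neg]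
      congr 1
      ext i
      simp only [Pi.star_apply, star_mul', Complex.star_def, Complex.conj_ofReal, Complex.conj_I,
        mul_neg]
    rw [star_mul, star_mul, star_star, hskew, neg_mul, Matrix.mul_neg, mul_assoc]
  · rw [Matrix.trace_mul_comm, ← mul_assoc, Unitary.star_mul_self_of_mem V.2, one_mul,
      Matrix.trace_diagonal, ← Finset.sum_mul, ← Complex.ofReal_sum, hθ, Complex.ofReal_zero,
      zero_mul]

lemma exists_eq_smul_unitaryExp [Nonempty n] (U : unitary (Matrix n n ℂ)) :
    ∃ (z : unitary ℂ) (a : skewAdjoint (Matrix n n ℂ)),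
      ‖(z : ℂ) - 1‖ ≤ Real.pi / Fintype.card n ∧ (a : Matrix n n ℂ) ∈ specialUnitaryLie n ∧
        U = z • unitaryExp a := by
  obtain ⟨V, θ₀, hU⟩ := exists_eq_unitary_mul_diagonal_mul_star U
  obtain ⟨θ, hθ, hexp⟩ := exists_phases_abs_sum_le_pi θ₀
  simp only [← hexp] at hU
  set τ : ℝ := (∑ i, θ i) / Fintype.card n with hτ
  have hz : Complex.exp (Complex.I * τ) ∈ unitary ℂ := by
    rw [Unitary.mem_iff_star_mul_self, Complex.star_def, ← Complex.normSq_eq_conj_mul_self,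
      Complex.normSq_eq_norm_sq, Complex.norm_exp_I_mul_ofReal, one_pow, Complex.ofReal_one]
  have hsum : ∑ i, (θ i - τ) = 0 := by
    rw [Finset.sum_sub_distrib, Finset.sum_const, Finset.card_univ, nsmul_eq_mul, hτ,
      mul_div_cancel₀ _ (Nat.cast_ne_zero.2 Fintype.card_ne_zero), sub_self]
  have ha := unitary_mul_diagonal_mul_star_mem_specialUnitaryLie V hsum
  refine ⟨⟨_, hz⟩, ⟨_, ha.1⟩, ?_, ha, Subtype.ext ?_⟩
  · refine Real.norm_exp_I_mul_ofReal_sub_one_le.trans ?_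
    rw [hτ, Real.norm_eq_abs, abs_div, Nat.abs_cast]
    gcongr
  · refine hU.trans (Eq.trans ?_ (congrArg (Complex.exp (Complex.I * τ) • ·)
      (exp_unitary_mul_mul_star V _).symm))
    rw [exp_diagonal_ofReal_mul_I, ← smul_mul_assoc, ← mul_smul_comm, ← Matrix.diagonal_smul]
    congr 3
    ext i
    rw [Pi.smul_apply, smul_eq_mul, mul_comm Complex.I, ← Complex.exp_add, ← add_mul,
      ← Complex.ofReal_add, add_sub_cancel]

end UnitaryMatrixExp

section Gradient

open scoped Matrix.Norms.Frobenius Matrix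

variable {n κ : Type*} [Fintype n] [DecidableEq n]

/-- The gradient of a polynomial function along the left action of the special unitary group:
the element of `𝔰𝔲(n)` representing `A ↦ D_A p (x)`. -/
noncomputable def lieGradient (x : Matrix n n ℂ) (p : CoordPoly (Matrix n n ℂ)) :
    specialUnitaryLie n :=
  (InnerProductSpace.toDual ℝ (specialUnitaryLie n)).symm <| LinearMap.toContinuousLinearMap
    { toFun := fun A => evalAt x (invariantField (A : Matrix n n ℂ) p)
      map_add' := fun A B => by
        rw [Submodule.coe_add, map_add, Derivation.add_apply, map_add]
      map_smul' := fun c A => by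
        rw [Submodule.coe_smul, map_smul, Derivation.smul_apply, map_smul, RingHom.id_apply] }

lemma real_inner_lieGradient (x : Matrix n n ℂ) (p : CoordPoly (Matrix n n ℂ))
    (A : specialUnitaryLie n) :
    inner ℝ (lieGradient x p) A = evalAt x (invariantField (A : Matrix n n ℂ) p) :=
  InnerProductSpace.toDual_symm_apply

lemma lieGradient_sub (x : Matrix n n ℂ) (p q : CoordPoly (Matrix n n ℂ)) :
    lieGradient x (p - q) = lieGradient x p - lieGradient x q :=
  ext_inner_right ℝ fun A => by
    rw [inner_sub_left, real_inner_lieGradient, real_inner_lieGradient, real_inner_lieGradient,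
      map_sub, map_sub]

variable [Fintype κ] (b : OrthonormalBasis κ ℝ (specialUnitaryLie n))

local notation "Δ" => laplacian fun k => (b k : Matrix n n ℂ)
local notation "Γ" => carréDuChamp fun k => (b k : Matrix n n ℂ)

lemma evalAt_carréDuChamp (x : Matrix n n ℂ) (p q : CoordPoly (Matrix n n ℂ)) :
    evalAt x (Γ p q) = inner ℝ (lieGradient x p) (lieGradient x q) := by
  rw [← b.sum_inner_mul_inner, carréDuChamp, map_sum]
  exact Finset.sum_congr rfl fun k _ => by
    rw [map_mul, real_inner_lieGradient, real_inner_comm, real_inner_lieGradient]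

lemma evalAt_carréDuChamp_self (x : Matrix n n ℂ) (p : CoordPoly (Matrix n n ℂ)) :
    evalAt x (Γ p p) = ‖lieGradient x p‖ ^ 2 := by
  rw [evalAt_carréDuChamp, real_inner_self_eq_norm_sq]

lemma invariantField_laplacian_of_mem {A : Matrix n n ℂ} (hA : A ∈ specialUnitaryLie n)
    (p : CoordPoly (Matrix n n ℂ)) :
    invariantField A (Δ p) = Δ (invariantField A p) := by
  refine invariantField_laplacian
    (c := fun k l => inner ℝ (b l : Matrix n n ℂ) (b k * A - A * b k)) (fun k l => ?_)
    (fun k => ?_) p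
  · rw [real_inner_comm, real_inner_commutator hA.1]
  · exact (sum_inner_smul_basis b
      (commutator_mem_specialUnitaryLie (basis_mem_skewAdjoint b k) hA.1)).symm

-- The Ricci curvature of the bi-invariant metric enters as the antisymmetric part of the Hessian.
lemma mul_norm_lieGradient_sq_le [Nonempty n] (x : Matrix n n ℂ) (p : CoordPoly (Matrix n n ℂ)) :
    Fintype.card n / 2 * ‖lieGradient x p‖ ^ 2 ≤
      ∑ k, evalAt x (Γ (invariantField (b k : Matrix n n ℂ) p)
        (invariantField (b k : Matrix n n ℂ) p)) := by
  set H : κ → κ → ℝ := fun k l =>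
    evalAt x (invariantField (b l : Matrix n n ℂ) (invariantField (b k : Matrix n n ℂ) p))
  set G := lieGradient x p
  have hanti : ∀ k l, (H k l - H l k) ^ 2 =
      inner ℝ (b k : Matrix n n ℂ) (G * b l - b l * G) ^ 2 := fun k l => by
    have hbracket := commutator_mem_specialUnitaryLie (basis_mem_skewAdjoint b k)
      (basis_mem_skewAdjoint b l)
    rw [← map_sub, ← Derivation.commutator_apply, lie_invariantField,
      ← real_inner_lieGradient x p ⟨_, hbracket⟩, real_inner_comm, Submodule.coe_inner,
      real_inner_commutator (basis_mem_skewAdjoint b l), neg_sq]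
  have hRicci : ∑ l, ∑ k, (H k l - H l k) ^ 2 = 2 * Fintype.card n * ‖G‖ ^ 2 := by
    rw [Submodule.coe_norm, ← sum_norm_commutator_sq b G.2]
    refine Finset.sum_congr rfl fun l _ => ?_
    rw [norm_sub_rev, ← sum_inner_sq_basis b
      (commutator_mem_specialUnitaryLie G.2.1 (basis_mem_skewAdjoint b l))]
    exact Finset.sum_congr rfl fun k _ => hanti k l
  have hsym : ∑ l, ∑ k, (H k l - H l k) ^ 2 ≤ 4 * ∑ k, ∑ l, H k l ^ 2 := by
    calc _ ≤ ∑ l, ∑ k, (2 * H k l ^ 2 + 2 * H l k ^ 2) := by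
          gcongr with l _ k _
          linarith [sq_nonneg (H k l + H l k)]
      _ = _ := by
          simp only [Finset.sum_add_distrib, ← Finset.mul_sum]
          rw [Finset.sum_comm]
          ring
  have hΓ : ∑ k, evalAt x (Γ (invariantField (b k : Matrix n n ℂ) p)
      (invariantField (b k : Matrix n n ℂ) p)) = ∑ k, ∑ l, H k l ^ 2 := by
    simp only [H, carréDuChamp, map_sum, map_mul, sq]
  rw [hΓ]
  linarith

end Gradient

lemma integral_exp_le_of_sub_le {Ω : Type*} [MeasurableSpace Ω] {μ : Measure Ω}
    [IsProbabilityMeasure μ] {f : Ω → ℝ} {d : ℝ} (hf : Integrable f μ)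
    (hd : ∀ x y, f x - f y ≤ d) :
    ∫ x, Real.exp (f x) ∂μ ≤ Real.exp (∫ x, f x ∂μ + d ^ 2 / 8) := by
  have : Nonempty Ω := nonempty_of_isProbabilityMeasure μ
  set m := ∫ x, f x ∂μ
  have hbdd : BddBelow (Set.range f) :=
    ⟨f (Classical.arbitrary Ω) - d, Set.forall_mem_range.2 fun y => sub_le_comm.1 (hd _ y)⟩
  have hIcc : ∀ x, f x - m ∈ Set.Icc ((⨅ y, f y) - m) ((⨅ y, f y) + d - m) := fun x =>
    ⟨sub_le_sub_right (ciInf_le hbdd x) m, sub_le_sub_right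
      (sub_le_iff_le_add.1 (le_ciInf fun y => by linarith [hd x y])) m⟩
  have hmean : ∫ x, (f x - m) ∂μ = 0 := by
    rw [integral_sub hf (integrable_const m), integral_const, probReal_univ, one_smul, sub_self]
  have hmgf := (ProbabilityTheory.hasSubgaussianMGF_of_mem_Icc_of_integral_eq_zero
    (hf.sub (integrable_const m)).aemeasurable (.of_forall hIcc) hmean).mgf_le 1
  rw [ProbabilityTheory.mgf, show (⨅ y, f y) + d - m - ((⨅ y, f y) - m) = d by ring] at hmgf
  have hsq : (((‖d‖₊ / 2) ^ 2 : NNReal) : ℝ) * 1 ^ 2 / 2 = d ^ 2 / 8 := by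
    push_cast
    rw [div_pow, Real.norm_eq_abs, sq_abs]
    ring
  calc ∫ x, Real.exp (f x) ∂μ = Real.exp m * ∫ x, Real.exp (1 * (f x - m)) ∂μ := by
        rw [← integral_const_mul]
        refine integral_congr_ae (.of_forall fun x => ?_)
        simp only [one_mul, ← Real.exp_add, add_sub_cancel]
    _ ≤ Real.exp m * Real.exp (d ^ 2 / 8) := by
        rw [← hsq]
        exact mul_le_mul_of_nonneg_left hmgf (Real.exp_pos _).le
    _ = _ := (Real.exp_add _ _).symm

section PolynomialConcentration

open scoped Matrix.Norms.Frobenius Matrix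

variable {n κ : Type*} [Fintype n] [DecidableEq n]

/-- The topology of the Frobenius norm, which instance unification does not identify with
`instTopologicalSpaceMatrix`. -/
@[reducible] noncomputable local instance frobeniusTopology : TopologicalSpace (Matrix n n ℂ) :=
  (inferInstance : PseudoMetricSpace (Matrix n n ℂ)).toUniformSpace.toTopologicalSpace

instance compactSpace_unitary_matrix : CompactSpace (unitary (Matrix n n ℂ)) := by
  have : ProperSpace (Matrix n n ℂ) := FiniteDimensional.proper ℂ _
  refine isCompact_iff_compactSpace.1 (Metric.isCompact_of_isClosed_isBounded isClosed_unitary ?_)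
  refine isBounded_iff_forall_norm_le.2 ⟨‖(1 : Matrix n n ℂ)‖, fun U hU => ?_⟩
  rw [← one_mul U, norm_mul_unitary 1 ⟨U, hU⟩]

lemma norm_lieGradient_le {f : CoordPoly (Matrix n n ℂ)} {K : NNReal}
    (hf : LipschitzWith K fun X : unitary (Matrix n n ℂ) => evalAt (X : Matrix n n ℂ) f)
    (X : unitary (Matrix n n ℂ)) : ‖lieGradient (X : Matrix n n ℂ) f‖ ≤ K := by
  set G := lieGradient (X : Matrix n n ℂ) f
  set a : skewAdjoint (Matrix n n ℂ) := ⟨G, G.2.1⟩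
  have hderiv := norm_deriv_le_mul_norm_deriv (K := K) (hasDerivAt_evalAt_flow a X f 0)
    (hasDerivAt_exp_smul_mul (a : Matrix n n ℂ) X 0) fun s => by
      have hdist := hf.dist_le_mul (unitaryExp (s • a) * X) (unitaryExp ((0 : ℝ) • a) * X)
      rwa [dist_eq_norm, Subtype.dist_eq, dist_eq_norm] at hdist
  rw [unitaryExp_zero_smul_mul, ← real_inner_lieGradient, real_inner_self_eq_norm_sq,
    zero_smul, NormedSpace.exp_zero, one_mul, norm_mul_unitary, norm_pow, norm_norm, sq,
    Submodule.coe_norm] at hderiv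
  rcases (norm_nonneg G).eq_or_lt with hG | hG
  · exact hG.symm.trans_le K.2
  · exact le_of_mul_le_mul_right hderiv hG

lemma evalAt_unitaryExp_mul_of_lieGradient_eq_zero {h : CoordPoly (Matrix n n ℂ)}
    (hh : ∀ X : unitary (Matrix n n ℂ), lieGradient (X : Matrix n n ℂ) h = 0)
    {a : skewAdjoint (Matrix n n ℂ)} (ha : (a : Matrix n n ℂ) ∈ specialUnitaryLie n)
    (X : unitary (Matrix n n ℂ)) :
    evalAt ((unitaryExp a * X : unitary (Matrix n n ℂ)) : Matrix n n ℂ) h =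
      evalAt (X : Matrix n n ℂ) h :=
  evalAt_unitaryExp_mul (fun Y => by
    rw [← real_inner_lieGradient Y.1 h ⟨a, ha⟩, hh, inner_zero_left]) X

variable [Fintype κ] (b : OrthonormalBasis κ ℝ (specialUnitaryLie n))

local notation "Δ" => laplacian fun k => (b k : Matrix n n ℂ)
local notation "Γ" => carréDuChamp fun k => (b k : Matrix n n ℂ)

lemma lieGradient_eq_zero {x : Matrix n n ℂ} {p : CoordPoly (Matrix n n ℂ)}
    (hp : ∀ k, evalAt x (invariantField (b k : Matrix n n ℂ) p) = 0) : lieGradient x p = 0 := by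
  rw [← norm_eq_zero, ← sq_eq_zero_iff, ← evalAt_carréDuChamp_self b, carréDuChamp, map_sum]
  exact Finset.sum_eq_zero fun k _ => by rw [map_mul, hp, zero_mul]

variable {h u : CoordPoly (Matrix n n ℂ)} {K : NNReal}

-- The maximum principle for `W ↦ u(WR) - u(W)` on the set where `W ↦ h(WR) - h(W)` takes its value
-- at `Y`; this set is invariant under the left action of `SU(n)`.
lemma evalAt_mul_sub_le
    (hh : ∀ X : unitary (Matrix n n ℂ), lieGradient (X : Matrix n n ℂ) h = 0)
    (hf : LipschitzWith K fun X : unitary (Matrix n n ℂ) =>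
      evalAt (X : Matrix n n ℂ) (h - Δ u)) (R Y : unitary (Matrix n n ℂ)) :
    evalAt ((Y * R : unitary (Matrix n n ℂ)) : Matrix n n ℂ) h - evalAt (Y : Matrix n n ℂ) h ≤
      K * ‖(R : Matrix n n ℂ) - 1‖ := by
  set φ : CoordPoly (Matrix n n ℂ) → unitary (Matrix n n ℂ) → ℝ := fun p W =>
    evalAt ((W * R : unitary (Matrix n n ℂ)) : Matrix n n ℂ) p - evalAt (W : Matrix n n ℂ) p
  have hcont : ∀ p, Continuous (φ p) := fun p =>
    ((continuous_evalAt_coe p).comp (continuous_mul_const R)).sub (continuous_evalAt_coe p)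
  obtain ⟨W, hW : φ h W = φ h Y, hmax⟩ :=
    (isClosed_singleton.preimage (hcont h)).isCompact.exists_isMaxOn ⟨Y, rfl⟩ (hcont u).continuousOn
  have hΔ := evalAt_laplacian_le (basis_mem_skewAdjoint b) (X := W * R) (Y := W) (p := u) (q := u)
    fun k s => by
      rw [← mul_assoc]
      refine hmax (Eq.trans ?_ hW)
      have hbk : ((s • ⟨b k, basis_mem_skewAdjoint b k⟩ : skewAdjoint (Matrix n n ℂ)) :
          Matrix n n ℂ) ∈ specialUnitaryLie n := (s • b k).2
      simp only [φ, mul_assoc, evalAt_unitaryExp_mul_of_lieGradient_eq_zero hh hbk]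
  have hLip := (le_abs_self _).trans (hf.dist_le_mul (W * R) W)
  have hnorm : dist (W * R) W = ‖(R : Matrix n n ℂ) - 1‖ := by
    rw [Subtype.dist_eq, dist_eq_norm, Submonoid.coe_mul, ← norm_unitary_mul W (R - 1), mul_sub,
      mul_one]
  rw [hnorm] at hLip
  simp only [map_sub] at hLip
  change φ h Y ≤ _
  rw [← hW]
  linarith

variable [Nonempty n]

-- Maximum principle for the squared gradient of `u`, by the Bochner formula.
lemma norm_lieGradient_le_of_laplacian
    (hh : ∀ X : unitary (Matrix n n ℂ), lieGradient (X : Matrix n n ℂ) h = 0)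
    (hf : LipschitzWith K fun X : unitary (Matrix n n ℂ) =>
      evalAt (X : Matrix n n ℂ) (h - Δ u)) (X : unitary (Matrix n n ℂ)) :
    ‖lieGradient (X : Matrix n n ℂ) u‖ ≤ 2 * K / Fintype.card n := by
  obtain ⟨Y, -, hY⟩ := isCompact_univ.exists_isMaxOn Set.univ_nonempty
    (continuous_evalAt_coe (𝔸 := Matrix n n ℂ) (Γ u u)).continuousOn
  have hmax : ∀ Z : unitary (Matrix n n ℂ),
      evalAt (Z : Matrix n n ℂ) (Γ u u) ≤ evalAt (Y : Matrix n n ℂ) (Γ u u) :=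
    fun Z => hY (Set.mem_univ Z)
  have hXY : ‖lieGradient (X : Matrix n n ℂ) u‖ ≤ ‖lieGradient (Y : Matrix n n ℂ) u‖ := by
    simpa only [evalAt_carréDuChamp_self, sq_le_sq₀ (norm_nonneg _) (norm_nonneg _)] using hmax X
  have hbochner := evalAt_laplacian_le (basis_mem_skewAdjoint b) (X := Y) (Y := Y) (p := Γ u u)
    (q := 0) fun k s => by simpa only [map_zero, sub_zero] using hmax _
  rw [laplacian_carréDuChamp_self _ fun k => invariantField_laplacian_of_mem b (b k).2 u,
    map_zero, map_zero, map_mul, map_add, map_sum, evalAt_carréDuChamp b _ u, map_ofNat] at hbochner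
  have hhess := mul_norm_lieGradient_sq_le b (Y : Matrix n n ℂ) u
  have hinner := (real_inner_le_norm _ _).trans (mul_le_mul_of_nonneg_left
    (norm_lieGradient_le hf Y) (norm_nonneg (lieGradient (Y : Matrix n n ℂ) u)))
  rw [lieGradient_sub, hh, zero_sub, inner_neg_right] at hinner
  have hn : (0 : ℝ) < Fintype.card n := Nat.cast_pos.2 Fintype.card_pos
  refine hXY.trans ?_
  rw [le_div_iff₀ hn]
  by_contra! hlt
  nlinarith [norm_nonneg (lieGradient (Y : Matrix n n ℂ) u), K.2]

lemma evalAt_sub_evalAt_le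
    (hh : ∀ X : unitary (Matrix n n ℂ), lieGradient (X : Matrix n n ℂ) h = 0)
    (hf : LipschitzWith K fun X : unitary (Matrix n n ℂ) =>
      evalAt (X : Matrix n n ℂ) (h - Δ u)) (X Y : unitary (Matrix n n ℂ)) :
    evalAt (X : Matrix n n ℂ) h - evalAt (Y : Matrix n n ℂ) h ≤
      K * Real.pi / √(Fintype.card n) := by
  obtain ⟨z, a, hz, ha, hXY⟩ := exists_eq_smul_unitaryExp (X * Y⁻¹)
  have hX : X = unitaryExp a * Y * (z • 1 : unitary (Matrix n n ℂ)) := by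
    refine (eq_mul_of_mul_inv_eq hXY).trans (Subtype.ext ?_)
    change ((z : ℂ) • (unitaryExp a : Matrix n n ℂ)) * Y = unitaryExp a * Y * ((z : ℂ) • 1)
    rw [smul_mul_assoc, mul_smul_comm, mul_one]
  have : (0 : ℝ) < Fintype.card n := Nat.cast_pos.2 Fintype.card_pos
  have hone : ‖(1 : Matrix n n ℂ)‖ = √(Fintype.card n) := by
    rw [← norm_unitary_sq (1 : unitary (Matrix n n ℂ)), Real.sqrt_sq (norm_nonneg _),
      Submonoid.coe_one]
  calc _ ≤ K * ‖((z • 1 : unitary (Matrix n n ℂ)) : Matrix n n ℂ) - 1‖ := by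
        have hmul := evalAt_mul_sub_le b hh hf (z • 1) (unitaryExp a * Y)
        rwa [← hX, evalAt_unitaryExp_mul_of_lieGradient_eq_zero hh ha] at hmul
    _ = K * (‖(z : ℂ) - 1‖ * √(Fintype.card n)) := by
        rw [← hone, ← norm_smul, sub_smul, one_smul]
        rfl
    _ ≤ K * (Real.pi / Fintype.card n * √(Fintype.card n)) := by gcongr
    _ = _ := by
        rw [div_mul_eq_mul_div, mul_div_assoc, Real.sqrt_div_self', mul_one_div, mul_div_assoc]

variable [MeasurableSpace (unitary (Matrix n n ℂ))] [BorelSpace (unitary (Matrix n n ℂ))]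
  (μ : Measure (unitary (Matrix n n ℂ))) [IsProbabilityMeasure μ] [μ.IsMulLeftInvariant]

lemma integral_exp_evalAt_le {f : CoordPoly (Matrix n n ℂ)}
    (hf : LipschitzWith K fun X : unitary (Matrix n n ℂ) => evalAt (X : Matrix n n ℂ) f) :
    ∫ X : unitary (Matrix n n ℂ), Real.exp (evalAt (X : Matrix n n ℂ) f) ∂μ ≤
      Real.exp (∫ X : unitary (Matrix n n ℂ), evalAt (X : Matrix n n ℂ) f ∂μ +
        3 * K ^ 2 / Fintype.card n) := by
  have : μ.IsOpenPosMeasure :=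
    isOpenPosMeasure_of_mulLeftInvariant_of_compact Set.univ isCompact_univ (by simp)
  set b := stdOrthonormalBasis ℝ (specialUnitaryLie n)
  have he := basis_mem_skewAdjoint b
  obtain ⟨h, u, rfl, hh⟩ := exists_eq_sub_laplacian μ he f
  have hgrad := fun X => lieGradient_eq_zero b fun k => hh k X
  have hn : (0 : ℝ) < Fintype.card n := Nat.cast_pos.2 Fintype.card_pos
  have hΓ : ∀ X : unitary (Matrix n n ℂ), evalAt (X : Matrix n n ℂ) (carréDuChamp
      (fun k => (b k : Matrix n n ℂ)) u (h - laplacian (fun k => (b k : Matrix n n ℂ)) u)) ≤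
      2 * (K ^ 2 / Fintype.card n) := fun X => by
    rw [evalAt_carréDuChamp]
    calc _ ≤ _ := real_inner_le_norm _ _
      _ ≤ 2 * K / Fintype.card n * K := mul_le_mul (norm_lieGradient_le_of_laplacian b hgrad hf X)
          (norm_lieGradient_le hf X) (norm_nonneg _) (by positivity)
      _ = _ := by ring
  have hmean : ∫ X : unitary (Matrix n n ℂ), evalAt (X : Matrix n n ℂ) h ∂μ =
      ∫ X : unitary (Matrix n n ℂ), evalAt (X : Matrix n n ℂ)
        (h - laplacian (fun k => (b k : Matrix n n ℂ)) u) ∂μ := by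
    simp only [map_sub]
    rw [integral_sub (integrable_of_continuous μ (continuous_evalAt_coe _))
      (integrable_of_continuous μ (continuous_evalAt_coe _)), integral_laplacian_eq_zero μ he,
      sub_zero]
  have hpi : (K * Real.pi / √(Fintype.card n)) ^ 2 / 8 ≤ 2 * K ^ 2 / Fintype.card n := by
    rw [div_pow, mul_pow, Real.sq_sqrt hn.le, div_div, mul_comm _ (8 : ℝ), ← div_div]
    gcongr
    have hpi : Real.pi ^ 2 ≤ 4 ^ 2 := by gcongr; exact Real.pi_le_four
    nlinarith [mul_le_mul_of_nonneg_left hpi (sq_nonneg (K : ℝ))]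
  refine (integral_exp_le_exp_mul_integral_exp μ he hh hΓ).trans ?_
  refine (mul_le_mul_of_nonneg_left (integral_exp_le_of_sub_le
    (integrable_of_continuous μ (continuous_evalAt_coe h)) (evalAt_sub_evalAt_le b hgrad hf))
    (Real.exp_pos _).le).trans ?_
  rw [← Real.exp_add, hmean, Real.exp_le_exp]
  linarith [show 3 * (K : ℝ) ^ 2 / Fintype.card n = K ^ 2 / Fintype.card n +
    2 * K ^ 2 / Fintype.card n by ring]

end PolynomialConcentration

section Mollification

lemma exists_evalAt_eq_integral_mul_pow {V Ω : Type*} [AddCommGroup V] [Module ℝ V]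
    [Module.Finite ℝ V] [TopologicalSpace Ω] [CompactSpace Ω] [MeasurableSpace Ω]
    [OpensMeasurableSpace Ω] (μ : Measure Ω) [IsFiniteMeasure μ] {φ : Ω → Module.Dual ℝ V}
    (hφ : ∀ x, Continuous fun ω => φ ω x) (c : ℝ) (m : ℕ) {g : Ω → ℝ} (hg : Continuous g) :
    ∃ p : CoordPoly V, ∀ x, evalAt x p = ∫ ω, g ω * (c + φ ω x) ^ m ∂μ := by
  set b := Module.finBasis ℝ V
  induction m generalizing g with
  | zero => exact ⟨MvPolynomial.C (∫ ω, g ω ∂μ), fun x => by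
      simp only [MvPolynomial.algHom_C, pow_zero, mul_one, Algebra.algebraMap_self,
        RingHom.id_apply]⟩
  | succ m ih =>
    obtain ⟨p, hp⟩ := ih hg
    choose q hq using fun i => ih (g := fun ω => g ω * φ ω (b i)) (hg.mul (hφ _))
    refine ⟨MvPolynomial.C c * p + ∑ i, MvPolynomial.X i * q i, fun x => ?_⟩
    have hpow : Continuous fun ω => (c + φ ω x) ^ m := ((hφ x).const_add c).pow m
    have hexpand : ∀ ω, g ω * (c + φ ω x) ^ (m + 1) = c * (g ω * (c + φ ω x) ^ m) +
        ∑ i, b.coord i x * (g ω * φ ω (b i) * (c + φ ω x) ^ m) := fun ω => by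
      have hφx : φ ω x = ∑ i, b.coord i x * φ ω (b i) := by
        conv_lhs => rw [← b.sum_repr x]
        simp only [map_sum, map_smul, smul_eq_mul, Module.Basis.coord_apply]
      rw [pow_succ]
      nth_rw 2 [hφx]
      rw [mul_add, mul_add, Finset.mul_sum, Finset.mul_sum]
      exact congrArg₂ _ (by ring) (Finset.sum_congr rfl fun i _ => by ring)
    have hint₀ : Integrable (fun ω => c * (g ω * (c + φ ω x) ^ m)) μ :=
      integrable_of_continuous μ ((hg.mul hpow).const_mul c)
    have hint : ∀ i, Integrable
        (fun ω => b.coord i x * (g ω * φ ω (b i) * (c + φ ω x) ^ m)) μ := fun i =>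
      integrable_of_continuous μ (((hg.mul (hφ _)).mul hpow).const_mul _)
    simp only [hexpand]
    rw [integral_add hint₀ (integrable_finsetSum _ fun i _ => hint i),
      integral_finsetSum _ fun i _ => hint i]
    simp only [integral_const_mul, map_add, map_sum, map_mul, MvPolynomial.algHom_C, hp, hq,
      evalAt_X, Algebra.algebraMap_self, RingHom.id_apply, b]

variable {G : Type*} [Group G] [PseudoMetricSpace G] [ContinuousMul G] [CompactSpace G]
  [MeasurableSpace G] [OpensMeasurableSpace G] (μ : Measure G) [IsFiniteMeasure μ]
  {w g : G → ℝ} {K : NNReal}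

lemma lipschitzWith_integral_mul_comp_mul [IsIsometricSMul Gᵐᵒᵖ G] (hw : Continuous w)
    (hw0 : 0 ≤ w) (hw1 : ∫ z, w z ∂μ = 1) (hg : LipschitzWith K g) :
    LipschitzWith K fun x => ∫ z, w z * g (x * z) ∂μ := by
  have hint : ∀ x, Integrable (fun z => w z * g (x * z)) μ := fun x =>
    integrable_of_continuous μ (hw.mul (hg.continuous.comp (continuous_const_mul x)))
  refine LipschitzWith.of_dist_le_mul fun x y => ?_
  rw [dist_eq_norm, ← integral_sub (hint x) (hint y)]
  refine (norm_integral_le_of_norm_le (integrable_of_continuous μ (hw.mul_const _))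
    (.of_forall fun z => ?_)).trans_eq
    ((integral_mul_const (K * dist x y) w).trans (by rw [hw1, one_mul]))
  rw [← mul_sub, norm_mul, Real.norm_of_nonneg (hw0 z), ← dist_eq_norm, ← dist_mul_right x y z]
  exact mul_le_mul_of_nonneg_left (hg.dist_le_mul _ _) (hw0 z)

lemma abs_integral_mul_comp_mul_sub_le [IsIsometricSMul G G] (hw : Continuous w)
    (hw0 : 0 ≤ w) (hw1 : ∫ z, w z ∂μ = 1) (hg : LipschitzWith K g) (x : G) :
    |∫ z, w z * g (x * z) ∂μ - g x| ≤ K * ∫ z, w z * dist z 1 ∂μ := by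
  have hmean : g x = ∫ z, w z * g x ∂μ := by rw [integral_mul_const, hw1, one_mul]
  have hdist : Continuous fun z : G => dist z 1 := continuous_id.dist continuous_const
  have hint : Integrable (fun z => w z * g (x * z)) μ :=
    integrable_of_continuous μ (hw.mul (hg.continuous.comp (continuous_const_mul x)))
  conv_lhs => rw [hmean]
  rw [← integral_sub hint (integrable_of_continuous μ (hw.mul_const _)), ← integral_const_mul,
    ← Real.norm_eq_abs]
  refine norm_integral_le_of_norm_le
    (integrable_of_continuous μ ((hw.mul hdist).const_mul _)) (.of_forall fun z => ?_)
  rw [← mul_sub, norm_mul, Real.norm_of_nonneg (hw0 z), ← dist_eq_norm, mul_left_comm]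
  refine mul_le_mul_of_nonneg_left ((hg.dist_le_mul _ _).trans_eq ?_) (hw0 z)
  rw [← dist_mul_left x z 1, mul_one]

end Mollification

section PeakKernel

open scoped Matrix.Norms.Frobenius Matrix

variable {n : Type*} [Fintype n] [DecidableEq n]

attribute [local instance] frobeniusTopology

instance isIsometricSMul_unitary_matrix :
    IsIsometricSMul (unitary (Matrix n n ℂ)) (unitary (Matrix n n ℂ)) :=
  ⟨fun U => Isometry.of_dist_eq fun X Y => by
    rw [Subtype.dist_eq, Subtype.dist_eq, dist_eq_norm, dist_eq_norm, smul_eq_mul, smul_eq_mul,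
      Submonoid.coe_mul, Submonoid.coe_mul, ← mul_sub, norm_unitary_mul]⟩

instance isIsometricSMul_op_unitary_matrix :
    IsIsometricSMul (unitary (Matrix n n ℂ))ᵐᵒᵖ (unitary (Matrix n n ℂ)) :=
  ⟨fun U => Isometry.of_dist_eq fun X Y => by
    rw [Subtype.dist_eq, Subtype.dist_eq, dist_eq_norm, dist_eq_norm, MulOpposite.smul_eq_mul_unop,
      MulOpposite.smul_eq_mul_unop, Submonoid.coe_mul, Submonoid.coe_mul, ← sub_mul,
      norm_mul_unitary]⟩

lemma norm_unitary_add_sq (X Y : unitary (Matrix n n ℂ)) :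
    ‖(X + Y : Matrix n n ℂ)‖ ^ 2 = 2 * Fintype.card n + 2 * inner ℝ (Y : Matrix n n ℂ) X := by
  rw [norm_add_sq_real, norm_unitary_sq, norm_unitary_sq, real_inner_comm]
  ring

lemma norm_one_add_unitary_sq (Z : unitary (Matrix n n ℂ)) :
    ‖(1 + Z : Matrix n n ℂ)‖ ^ 2 = 4 * Fintype.card n - dist Z 1 ^ 2 := by
  have hparallelogram := parallelogram_law_with_norm ℝ
    ((1 : unitary (Matrix n n ℂ)) : Matrix n n ℂ) Z
  rw [norm_unitary_sq, norm_unitary_sq, Submonoid.coe_one] at hparallelogram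
  rw [dist_comm, Subtype.dist_eq, dist_eq_norm, Submonoid.coe_one]
  linarith

lemma norm_one_add_one_sq_pos [Nonempty n] :
    0 < ‖(1 + (1 : unitary (Matrix n n ℂ)) : Matrix n n ℂ)‖ ^ 2 := by
  have : (0 : ℝ) < Fintype.card n := Nat.cast_pos.2 Fintype.card_pos
  rw [norm_one_add_unitary_sq, dist_self, zero_pow two_ne_zero, sub_zero]
  positivity

lemma continuous_norm_one_add_sq :
    Continuous fun Z : unitary (Matrix n n ℂ) => ‖(1 + Z : Matrix n n ℂ)‖ ^ 2 :=
  (continuous_subtype_val.const_add 1).norm.pow 2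

variable [MeasurableSpace (unitary (Matrix n n ℂ))] (μ : Measure (unitary (Matrix n n ℂ)))

/-- The `m`-th power of `Z ↦ ‖1 + Z‖ ^ 2`, normalised to have integral one. It concentrates at the
identity as `m → ∞`. -/
noncomputable def peakKernel (m : ℕ) (Z : unitary (Matrix n n ℂ)) : ℝ :=
  (∫ W : unitary (Matrix n n ℂ), (‖(1 + W : Matrix n n ℂ)‖ ^ 2) ^ m ∂μ)⁻¹ *
    (‖(1 + Z : Matrix n n ℂ)‖ ^ 2) ^ m

lemma continuous_peakKernel (m : ℕ) : Continuous (peakKernel (n := n) μ m) :=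
  (continuous_norm_one_add_sq.pow m).const_mul _

lemma peakKernel_nonneg (m : ℕ) : 0 ≤ peakKernel (n := n) μ m := fun Z =>
  mul_nonneg (inv_nonneg.2 (integral_nonneg fun _ => by positivity)) (by positivity)

variable [BorelSpace (unitary (Matrix n n ℂ))] [IsFiniteMeasure μ]

lemma exists_evalAt_eq_integral_peakKernel_mul [μ.IsMulLeftInvariant] (m : ℕ)
    {g : unitary (Matrix n n ℂ) → ℝ} (hg : Continuous g) :
    ∃ p : CoordPoly (Matrix n n ℂ), ∀ X : unitary (Matrix n n ℂ),
      evalAt (X : Matrix n n ℂ) p = ∫ Z, peakKernel μ m Z * g (X * Z) ∂μ := by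
  set c := (∫ W : unitary (Matrix n n ℂ), (‖(1 + W : Matrix n n ℂ)‖ ^ 2) ^ m ∂μ)⁻¹ with hc
  have hφ : ∀ A : Matrix n n ℂ, Continuous fun Y : unitary (Matrix n n ℂ) =>
      ((2 : ℝ) • innerₛₗ ℝ (Y : Matrix n n ℂ)) A := fun A =>
    (continuous_subtype_val.inner continuous_const).const_mul 2
  obtain ⟨p, hp⟩ := exists_evalAt_eq_integral_mul_pow μ
    (φ := fun Y : unitary (Matrix n n ℂ) => (2 : ℝ) • innerₛₗ ℝ (Y : Matrix n n ℂ)) hφ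
    (2 * Fintype.card n) m (hg.const_mul c)
  refine ⟨p, fun X => ?_⟩
  rw [hp, ← integral_mul_left_eq_self (μ := μ) (fun Y => c * g Y *
    (2 * Fintype.card n + ((2 : ℝ) • innerₛₗ ℝ (Y : Matrix n n ℂ)) (X : Matrix n n ℂ)) ^ m) X]
  refine integral_congr_ae (.of_forall fun Z => ?_)
  have hXZ : ‖(1 + Z : Matrix n n ℂ)‖ =
      ‖(X + (X * Z : unitary (Matrix n n ℂ)) : Matrix n n ℂ)‖ := by
    rw [← norm_unitary_mul X, mul_add, mul_one, Submonoid.coe_mul]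
  simp only [peakKernel, ← hc, hXZ, norm_unitary_add_sq, LinearMap.smul_apply, innerₛₗ_apply_apply,
    smul_eq_mul]
  ring

variable [Nonempty n] [μ.IsOpenPosMeasure]

lemma integral_peakKernel (m : ℕ) :
    ∫ Z : unitary (Matrix n n ℂ), peakKernel μ m Z ∂μ = 1 := by
  unfold peakKernel
  rw [integral_const_mul]
  refine inv_mul_cancel₀ fun hzero => ?_
  have hone := congrFun (eq_zero_of_integral_eq_zero μ (continuous_norm_one_add_sq.pow m)
    (fun _ => pow_nonneg (sq_nonneg _) m) hzero) 1
  exact pow_ne_zero m norm_one_add_one_sq_pos.ne' hone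

lemma tendsto_integral_peakKernel_mul_dist_one :
    Filter.Tendsto (fun m => ∫ Z : unitary (Matrix n n ℂ), peakKernel μ m Z * dist Z 1 ∂μ)
      Filter.atTop (nhds 0) := by
  have hlt : ∀ Z : unitary (Matrix n n ℂ), Z ≠ 1 → ‖(1 + Z : Matrix n n ℂ)‖ ^ 2 <
      ‖(1 + (1 : unitary (Matrix n n ℂ)) : Matrix n n ℂ)‖ ^ 2 := fun Z hZ => by
    rw [norm_one_add_unitary_sq, norm_one_add_unitary_sq, dist_self]
    linarith [sq_pos_of_pos (dist_pos.2 hZ)]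
  have hdist : Continuous fun Z : unitary (Matrix n n ℂ) => dist Z 1 :=
    continuous_id.dist continuous_const
  have hlim := tendsto_setIntegral_pow_smul_of_unique_maximum_of_isCompact_of_continuousOn (μ := μ)
    isCompact_univ continuous_norm_one_add_sq.continuousOn (fun Z _ hZ => hlt Z hZ)
    (fun Z _ => by positivity) norm_one_add_one_sq_pos
    (by simp only [interior_univ, closure_univ, Set.mem_univ])
    hdist.continuousOn
  simpa only [Measure.restrict_univ, dist_self, smul_eq_mul, peakKernel, mul_assoc,
    integral_const_mul] using hlim

lemma exists_lipschitzWith_evalAt_near [μ.IsMulLeftInvariant] {g : unitary (Matrix n n ℂ) → ℝ}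
    {K : NNReal} (hg : LipschitzWith K g) {ε : ℝ} (hε : 0 < ε) :
    ∃ p : CoordPoly (Matrix n n ℂ),
      LipschitzWith K (fun X : unitary (Matrix n n ℂ) => evalAt (X : Matrix n n ℂ) p) ∧
      ∀ X : unitary (Matrix n n ℂ), |evalAt (X : Matrix n n ℂ) p - g X| ≤ ε := by
  have hlim := (tendsto_integral_peakKernel_mul_dist_one (n := n) μ).const_mul (K : ℝ)
  rw [mul_zero] at hlim
  obtain ⟨m, hm⟩ := (hlim.eventually (eventually_le_nhds hε)).exists
  obtain ⟨p, hp⟩ := exists_evalAt_eq_integral_peakKernel_mul μ m hg.continuous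
  refine ⟨p, ?_, fun X => ?_⟩
  · simpa only [hp] using lipschitzWith_integral_mul_comp_mul μ (continuous_peakKernel μ m)
      (peakKernel_nonneg μ m) (integral_peakKernel μ m) hg
  · rw [hp]
    exact (abs_integral_mul_comp_mul_sub_le μ (continuous_peakKernel μ m) (peakKernel_nonneg μ m)
      (integral_peakKernel μ m) hg X).trans hm

end PeakKernel

section Concentration

open scoped Matrix.Norms.Frobenius Matrix

variable {n : Type*} [Fintype n] [DecidableEq n]

attribute [local instance] frobeniusTopology

variable [MeasurableSpace (unitary (Matrix n n ℂ))] (μ : Measure (unitary (Matrix n n ℂ)))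
  [BorelSpace (unitary (Matrix n n ℂ))] [IsProbabilityMeasure μ] [μ.IsMulLeftInvariant] [Nonempty n]
  {g : unitary (Matrix n n ℂ) → ℝ} {K : NNReal}

lemma mgf_le_exp_add (hg : LipschitzWith K g) (hmean : ∫ X, g X ∂μ = 0) (t : ℝ) {ε : ℝ}
    (hε : 0 < ε) :
    ∫ X, Real.exp (t * g X) ∂μ ≤
      Real.exp (2 * (|t| * ε) + 3 * (|t| * K) ^ 2 / Fintype.card n) := by
  have : μ.IsOpenPosMeasure :=
    isOpenPosMeasure_of_mulLeftInvariant_of_compact Set.univ isCompact_univ (by simp)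
  obtain ⟨p, hp, hpg⟩ := exists_lipschitzWith_evalAt_near μ hg hε
  have hint := integrable_of_continuous μ (continuous_evalAt_coe (𝔸 := Matrix n n ℂ) (t • p))
  have hclose : ∀ X : unitary (Matrix n n ℂ),
      |evalAt (X : Matrix n n ℂ) (t • p) - t * g X| ≤ |t| * ε := fun X => by
    rw [map_smul, smul_eq_mul, ← mul_sub, abs_mul]
    exact mul_le_mul_of_nonneg_left (hpg X) (abs_nonneg t)
  have hmeanp : ∫ X : unitary (Matrix n n ℂ), evalAt (X : Matrix n n ℂ) (t • p) ∂μ ≤ |t| * ε := by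
    calc _ ≤ ∫ X, (t * g X + |t| * ε) ∂μ := integral_mono hint
          (((integrable_of_continuous μ hg.continuous).const_mul t).add (integrable_const _))
          fun X => sub_le_iff_le_add'.1 (le_of_abs_le (hclose X))
      _ = _ := by
        rw [integral_add ((integrable_of_continuous μ hg.continuous).const_mul t)
          (integrable_const _), integral_const_mul, hmean, integral_const, probReal_univ, mul_zero,
          zero_add, one_smul]
  have hpLip : LipschitzWith (‖t‖₊ * K)
      fun X : unitary (Matrix n n ℂ) => evalAt (X : Matrix n n ℂ) (t • p) := by
    simp only [map_smul]
    exact (lipschitzWith_smul t).comp hp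
  have hbound := integral_exp_evalAt_le μ hpLip
  rw [NNReal.coe_mul, coe_nnnorm, Real.norm_eq_abs] at hbound
  calc ∫ X, Real.exp (t * g X) ∂μ
      ≤ ∫ X : unitary (Matrix n n ℂ),
          Real.exp (|t| * ε) * Real.exp (evalAt (X : Matrix n n ℂ) (t • p)) ∂μ := by
        refine integral_mono (integrable_of_continuous μ (hg.continuous.const_mul t).rexp)
          (integrable_of_continuous μ ((continuous_evalAt_coe _).rexp.const_mul _)) fun X => ?_
        rw [← Real.exp_add, Real.exp_le_exp]
        linarith [neg_le_of_abs_le (hclose X)]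
    _ ≤ Real.exp (|t| * ε) * Real.exp (|t| * ε + 3 * (|t| * K) ^ 2 / Fintype.card n) := by
        rw [integral_const_mul]
        gcongr
        exact hbound.trans (by gcongr)
    _ = _ := by
        rw [← Real.exp_add]
        ring_nf

lemma hasSubgaussianMGF_of_lipschitzWith (hg : LipschitzWith K g) (hmean : ∫ X, g X ∂μ = 0) :
    ProbabilityTheory.HasSubgaussianMGF g (6 * K ^ 2 / Fintype.card n) μ where
  integrable_exp_mul t := integrable_of_continuous μ (hg.continuous.const_mul t).rexp
  mgf_le t := by
    have hlim : Filter.Tendsto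
        (fun ε : ℝ => Real.exp (2 * (|t| * ε) + 3 * (|t| * K) ^ 2 / Fintype.card n))
        (nhdsWithin 0 (Set.Ioi 0))
        (nhds (Real.exp (2 * (|t| * 0) + 3 * (|t| * K) ^ 2 / Fintype.card n))) :=
      (Continuous.tendsto (by fun_prop) 0).mono_left nhdsWithin_le_nhds
    refine (ge_of_tendsto hlim (eventually_mem_nhdsWithin.mono fun ε hε =>
      mgf_le_exp_add μ hg hmean t hε)).trans_eq ?_
    push_cast
    rw [mul_pow, sq_abs]
    ring_nf

lemma frob_eq_norm {N : ℕ} (A : Matrix (Fin N) (Fin N) ℂ) : frob A = ‖A‖ := by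
  rw [frob, Matrix.frobenius_norm_def, Real.sqrt_eq_rpow]
  simp only [Real.rpow_ofNat]

instance borelSpace_unitary_matrix {N : ℕ} : BorelSpace (unitary (Matrix (Fin N) (Fin N) ℂ)) :=
  have : BorelSpace (Matrix (Fin N) (Fin N) ℂ) := inferInstanceAs (BorelSpace (Fin N → Fin N → ℂ))
  Subtype.borelSpace _

lemma lipschitzWith_of_abs_sub_le_frob {N : ℕ} [Nonempty (Fin N)]
    {g : unitary (Matrix (Fin N) (Fin N) ℂ) → ℝ} {L : ℝ}
    (hg : ∀ X Y : unitary (Matrix (Fin N) (Fin N) ℂ),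
      |g X - g Y| ≤ L * frob ((X : Matrix (Fin N) (Fin N) ℂ) - (Y : Matrix (Fin N) (Fin N) ℂ))) :
    ∃ K : NNReal, (K : ℝ) = L ∧ LipschitzWith K g := by
  have hLip : ∀ X Y, dist (g X) (g Y) ≤ L * dist X Y := fun X Y => by
    rw [Real.dist_eq, Subtype.dist_eq, dist_eq_norm, ← frob_eq_norm]
    exact hg X Y
  have hne : (1 : unitary (Matrix (Fin N) (Fin N) ℂ)) ≠ -1 := fun h =>
    have : IsAddTorsionFree (Matrix (Fin N) (Fin N) ℂ) :=
      inferInstanceAs (IsAddTorsionFree (Fin N → Fin N → ℂ))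
    one_ne_zero (self_eq_neg.1 (congrArg Subtype.val h))
  have hL : 0 ≤ L := nonneg_of_mul_nonneg_left (dist_nonneg.trans (hLip _ _)) (dist_pos.2 hne)
  exact ⟨⟨L, hL⟩, rfl, LipschitzWith.of_dist_le_mul hLip⟩

end Concentration

theorem gromov_milman_concentration_unitary :
    ∃ c : ℝ, 0 < c ∧ ∃ c₁ : ℝ, 0 < c₁ ∧
      ∀ (N : ℕ), 1 ≤ N →
      ∀ (μ : Measure (Matrix.unitaryGroup (Fin N) ℂ)), IsProbabilityMeasure μ →
      (∀ g : Matrix.unitaryGroup (Fin N) ℂ, Measure.map (fun x => g * x) μ = μ) →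
      ∀ (g : Matrix.unitaryGroup (Fin N) ℂ → ℝ) (L : ℝ),
        (∀ Ω₁ Ω₂ : Matrix.unitaryGroup (Fin N) ℂ,
          |g Ω₁ - g Ω₂| ≤
            L * frob ((Ω₁ : Matrix (Fin N) (Fin N) ℂ) - (Ω₂ : Matrix (Fin N) (Fin N) ℂ))) →
        (∫ x, g x ∂μ) = 0 →
        (∀ t : ℝ, ∫ x, Real.exp (t * g x) ∂μ ≤ Real.exp (c * t ^ 2 * L ^ 2 / N)) ∧
        (∀ δ : ℝ, 0 < δ →
          (μ {x | δ ≤ g x}).toReal ≤ Real.exp (-c₁ * N * δ ^ 2 / L ^ 2)) := by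
  refine ⟨3, by norm_num, 1 / 12, by norm_num, fun N hN μ _ hinv g L hg hmean => ?_⟩
  have : Nonempty (Fin N) := ⟨⟨0, hN⟩⟩
  have : μ.IsMulLeftInvariant := ⟨hinv⟩
  obtain ⟨K, rfl, hK⟩ := lipschitzWith_of_abs_sub_le_frob hg
  have hsub := hasSubgaussianMGF_of_lipschitzWith μ hK hmean
  refine ⟨fun t => (hsub.mgf_le t).trans_eq ?_, fun δ hδ => (hsub.measure_ge_le hδ.le).trans_eq ?_⟩
  · push_cast
    rw [Fintype.card_fin]
    ring_nf
  · push_cast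
    rw [Fintype.card_fin, mul_div, div_div_eq_mul_div]
    ring_nf
end

section
/- Let N ≥ 1, T > 0 and 0 ≤ g ≤ 1/2. Let A ⊆ {1, …, N}² be a symmetric set of index pairs with (i, i) ∉ A for all i, and let (γ_{ij}) be a symmetric array of reals with 0 ≤ γ_{ij} ≤ g. Let z : [0, T] → ℝ^N be continuous with z_i(t) ≠ z_j(t) for all t and all (i, j) ∈ A, and let u : [0, T] → ℝ^N be continuously differentiable with u(0) = 0, satisfying for every i and t the ODE u_i'(t) = Σ_{j : (i,j) ∈ A} (1 − γ_{ij}) (u_j(t) − u_i(t)) / ( N (z_i(t) − z_j(t))² ) + (1/N) Σ_{j : (i,j) ∈ A} γ_{ij} / (z_i(t) − z_j(t)). Then for every t ∈ [0, T], (1/N) Σ_{i=1}^N u_i(t)² ≤ t g². -/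
open Finset

/-!
Differentiating `∑ uᵢ²` and symmetrizing the resulting double sum over `(i, j)` pairs the symmetric
kernel `B` with `-(uᵢ - uⱼ)²` and the antisymmetric forcing `f` with `uᵢ - uⱼ`. Completing the
square, each pair contributes at most `fᵢⱼ² / (4 Bᵢⱼ)`, in which the singular factor `(zᵢ - zⱼ)⁻²`
cancels: what remains is `γᵢⱼ² / (4 N (1 - γᵢⱼ)) ≤ g² / N`. Summing over at most `N²` pairs and
integrating in time gives the estimate.
-/

theorem mul_sub_mul_sq_le_of_sq_le {K : Type*} [Field K] [LinearOrder K] [IsStrictOrderedRing K]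
    {b f c : K} (hb : 0 ≤ b) (hc : 0 ≤ c) (hf : f ^ 2 ≤ 4 * b * c) (x : K) :
    f * x - b * x ^ 2 ≤ c := by
  rcases hb.eq_or_lt with rfl | hb
  · have hf0 : f = 0 := by simpa [sq_nonpos_iff] using hf
    simpa [hf0] using hc
  · have complete_square : 4 * b * (f * x - b * x ^ 2) = f ^ 2 - (f - 2 * b * x) ^ 2 := by ring
    refine le_of_mul_le_mul_left ?_ (by positivity : 0 < 4 * b)
    linarith [complete_square, sq_nonneg (f - 2 * b * x)]

section Drift

variable {ι R : Type*} [Fintype ι]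

/-- The right-hand side of a linear system on a finite set of sites `i`: diffusion of `v` with
jump rates `B i j`, plus the total of the pairwise forces `f i j` acting on `i`. -/
def interactionDrift [Ring R] (B f : ι → ι → R) (v : ι → R) (i : ι) : R :=
  ∑ j, B i j * (v j - v i) + ∑ j, f i j

theorem two_mul_sum_mul_interactionDrift [CommRing R] {B f : ι → ι → R}
    (hB : ∀ i j, B i j = B j i) (hf : ∀ i j, f i j = -f j i) (v : ι → R) :
    2 * ∑ i, v i * interactionDrift B f v i =
      ∑ i, ∑ j, (f i j * (v i - v j) - B i j * (v i - v j) ^ 2) := by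
  set F : ι → ι → R := fun i j => v i * (B i j * (v j - v i) + f i j) with hF
  calc 2 * ∑ i, v i * interactionDrift B f v i
      = ∑ i, ∑ j, F i j + ∑ i, ∑ j, F i j := by
        simp only [hF, interactionDrift, ← sum_add_distrib, mul_sum, two_mul]
    _ = ∑ i, ∑ j, F i j + ∑ i, ∑ j, F j i := by rw [sum_comm (f := fun i j => F j i)]
    _ = ∑ i, ∑ j, (f i j * (v i - v j) - B i j * (v i - v j) ^ 2) := by
        simp only [← sum_add_distrib]
        refine sum_congr rfl fun i _ => sum_congr rfl fun j _ => ?_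
        simp only [hF, hB j i, hf j i]
        ring

theorem two_mul_sum_mul_interactionDrift_le [Field R] [LinearOrder R] [IsStrictOrderedRing R]
    {B f c : ι → ι → R} (hB : ∀ i j, B i j = B j i) (hf : ∀ i j, f i j = -f j i)
    (hB0 : ∀ i j, 0 ≤ B i j) (hc0 : ∀ i j, 0 ≤ c i j)
    (hfc : ∀ i j, f i j ^ 2 ≤ 4 * B i j * c i j) (v : ι → R) :
    2 * ∑ i, v i * interactionDrift B f v i ≤ ∑ i, ∑ j, c i j := by
  rw [two_mul_sum_mul_interactionDrift hB hf]
  gcongr with i _ j _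
  exact mul_sub_mul_sq_le_of_sq_le (hB0 i j) (hc0 i j) (hfc i j) _

theorem sum_sq_le_add_mul_of_hasDerivWithinAt {a b C : ℝ} {u u' : ℝ → ι → ℝ}
    (hu : ∀ t ∈ Set.Icc a b, ∀ i, HasDerivWithinAt (fun s => u s i) (u' t i) (Set.Icc a b) t)
    (hC : ∀ t ∈ Set.Icc a b, 2 * ∑ i, u t i * u' t i ≤ C) {t : ℝ} (ht : t ∈ Set.Icc a b) :
    ∑ i, u t i ^ 2 ≤ ∑ i, u a i ^ 2 + C * (t - a) := by
  have energy_deriv : ∀ s ∈ Set.Icc a b, HasDerivWithinAt (fun r => ∑ i, u r i ^ 2)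
      (2 * ∑ i, u s i * u' s i) (Set.Icc a b) s := fun s hs => by
    simpa [mul_sum, mul_assoc] using HasDerivWithinAt.fun_sum fun i _ => (hu s hs i).fun_pow 2
  have energy_deriv_interior : ∀ s ∈ interior (Set.Icc a b),
      HasDerivAt (fun r => ∑ i, u r i ^ 2) (2 * ∑ i, u s i * u' s i) s := fun s hs =>
    (energy_deriv s (interior_subset hs)).hasDerivAt (mem_interior_iff_mem_nhds.1 hs)
  have increment_le := (convex_Icc a b).image_sub_le_mul_sub_of_deriv_le
    (fun s hs => (energy_deriv s hs).continuousWithinAt)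
    (fun s hs => (energy_deriv_interior s hs).differentiableAt.differentiableWithinAt)
    (fun s hs => (energy_deriv_interior s hs).deriv.trans_le (hC s (interior_subset hs)))
    a (Set.left_mem_Icc.2 (ht.1.trans ht.2)) t ht ht.1
  linarith

end Drift

section SingularInteraction

variable {ι : Type*} [DecidableEq ι] {N : ℕ} {A : Finset (ι × ι)} {γ : ι → ι → ℝ} {x : ι → ℝ}

/-- The interaction kernel `Bᵢⱼ = (1 - γᵢⱼ) / (N (xᵢ - xⱼ)²)` of the configuration `x`, extended
by zero outside the index set `A` so that it can be summed over all pairs. -/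
noncomputable def interactionKernel (N : ℕ) (A : Finset (ι × ι)) (γ : ι → ι → ℝ) (x : ι → ℝ)
    (i j : ι) : ℝ :=
  if (i, j) ∈ A then (1 - γ i j) / (N * (x i - x j) ^ 2) else 0

/-- The pairwise forcing `fᵢⱼ = γᵢⱼ / (N (xᵢ - xⱼ))` of the configuration `x`, extended by zero
outside the index set `A`. -/
noncomputable def pairForcing (N : ℕ) (A : Finset (ι × ι)) (γ : ι → ι → ℝ) (x : ι → ℝ)
    (i j : ι) : ℝ :=
  if (i, j) ∈ A then γ i j / (N * (x i - x j)) else 0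

theorem interactionKernel_comm (hA : ∀ i j, (i, j) ∈ A → (j, i) ∈ A)
    (hγ : ∀ i j, γ i j = γ j i) (i j : ι) :
    interactionKernel N A γ x i j = interactionKernel N A γ x j i := by
  simp only [interactionKernel, (⟨hA i j, hA j i⟩ : (i, j) ∈ A ↔ (j, i) ∈ A), hγ i j,
    sub_sq_comm (x i) (x j)]

theorem pairForcing_antisymm (hA : ∀ i j, (i, j) ∈ A → (j, i) ∈ A)
    (hγ : ∀ i j, γ i j = γ j i) (i j : ι) :
    pairForcing N A γ x i j = -pairForcing N A γ x j i := by
  simp only [pairForcing, (⟨hA i j, hA j i⟩ : (i, j) ∈ A ↔ (j, i) ∈ A), hγ i j]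
  rw [← neg_sub (x j) (x i), mul_neg, div_neg]
  split_ifs <;> simp only [neg_zero]

theorem interactionKernel_nonneg {i j : ι} (hγ : γ i j ≤ 1) :
    0 ≤ interactionKernel N A γ x i j := by
  rw [interactionKernel]
  split_ifs
  · exact div_nonneg (sub_nonneg.2 hγ) (by positivity)
  · exact le_rfl

theorem pairForcing_sq_le {g : ℝ} {i j : ι} (hx : (i, j) ∈ A → x i ≠ x j)
    (hγ : |γ i j| ≤ g) (hg : g ≤ 3 / 4) :
    pairForcing N A γ x i j ^ 2 ≤ 4 * interactionKernel N A γ x i j * (g ^ 2 / N) := by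
  by_cases hij : (i, j) ∈ A
  · have hx' : x i - x j ≠ 0 := sub_ne_zero.2 (hx hij)
    have γ_sq_le : γ i j ^ 2 ≤ 4 * (1 - γ i j) * g ^ 2 := calc
      γ i j ^ 2 ≤ 1 * g ^ 2 := by rw [one_mul]; exact sq_le_sq.2 (hγ.trans (le_abs_self g))
      _ ≤ 4 * (1 - γ i j) * g ^ 2 := by gcongr; linarith [le_abs_self (γ i j)]
    calc pairForcing N A γ x i j ^ 2 = γ i j ^ 2 / (N * (x i - x j)) ^ 2 := by
          rw [pairForcing, if_pos hij, div_pow]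
      _ ≤ 4 * (1 - γ i j) * g ^ 2 / (N * (x i - x j)) ^ 2 := by gcongr
      _ = 4 * interactionKernel N A γ x i j * (g ^ 2 / N) := by
          rw [interactionKernel, if_pos hij]
          field_simp
  · simp [pairForcing, interactionKernel, hij]

theorem interactionDrift_interactionKernel_pairForcing [Fintype ι] (v : ι → ℝ) (i : ι) :
    interactionDrift (interactionKernel N A γ x) (pairForcing N A γ x) v i =
      ∑ j with (i, j) ∈ A, (1 - γ i j) * (v j - v i) / (N * (x i - x j) ^ 2) +
        1 / (N : ℝ) * ∑ j with (i, j) ∈ A, γ i j / (x i - x j) := by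
  simp only [interactionDrift, interactionKernel, pairForcing, ite_mul, zero_mul, ← sum_filter,
    mul_sum, div_mul_eq_mul_div, one_mul, div_div, mul_comm (N : ℝ)]

end SingularInteraction

theorem energy_estimate_interpolating_ode_general {ι : Type*} [Fintype ι] [DecidableEq ι] {N : ℕ}
    (hN : 0 < N) (hcard : Fintype.card ι = N) {T g : ℝ} (hg : g ≤ 3 / 4) {A : Finset (ι × ι)}
    (hA : ∀ i j, (i, j) ∈ A → (j, i) ∈ A) {γ : ι → ι → ℝ} (hγsymm : ∀ i j, γ i j = γ j i)
    (hγ : ∀ i j, |γ i j| ≤ g) {z u : ℝ → ι → ℝ}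
    (hz : ∀ t ∈ Set.Icc 0 T, ∀ i j, (i, j) ∈ A → z t i ≠ z t j)
    (hode : ∀ t ∈ Set.Icc 0 T, ∀ i, HasDerivWithinAt (fun s => u s i)
      (∑ j with (i, j) ∈ A, (1 - γ i j) * (u t j - u t i) / (N * (z t i - z t j) ^ 2) +
        1 / (N : ℝ) * ∑ j with (i, j) ∈ A, γ i j / (z t i - z t j)) (Set.Icc 0 T) t)
    {t : ℝ} (ht : t ∈ Set.Icc 0 T) :
    1 / (N : ℝ) * ∑ i, u t i ^ 2 ≤ 1 / (N : ℝ) * ∑ i, u 0 i ^ 2 + t * g ^ 2 := by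
  simp only [← interactionDrift_interactionKernel_pairForcing] at hode
  have energy_rate_le : ∀ s ∈ Set.Icc 0 T,
      2 * ∑ i, u s i * interactionDrift (interactionKernel N A γ (z s))
        (pairForcing N A γ (z s)) (u s) i ≤ ∑ _i : ι, ∑ _j : ι, g ^ 2 / N := fun s hs =>
    two_mul_sum_mul_interactionDrift_le (interactionKernel_comm hA hγsymm)
      (pairForcing_antisymm hA hγsymm)
      (fun i j => interactionKernel_nonneg (by linarith [le_abs_self (γ i j), hγ i j]))
      (fun _ _ => by positivity)
      (fun i j => pairForcing_sq_le (hz s hs i j) (hγ i j) hg) (u s)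
  have energy_le := sum_sq_le_add_mul_of_hasDerivWithinAt hode energy_rate_le ht
  simp only [sum_const, card_univ, hcard, nsmul_eq_mul, sub_zero] at energy_le
  calc 1 / (N : ℝ) * ∑ i, u t i ^ 2
      ≤ 1 / (N : ℝ) * (∑ i, u 0 i ^ 2 + N * (N * (g ^ 2 / N)) * t) := by gcongr
    _ = 1 / (N : ℝ) * ∑ i, u 0 i ^ 2 + t * g ^ 2 := by field_simp

theorem energy_estimate_interpolating_ode
    (N : ℕ) (hN : 1 ≤ N) (T : ℝ) (hT : 0 < T) (g : ℝ) (hg0 : 0 ≤ g) (hg : g ≤ 1 / 2)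
    (A : Finset (Fin N × Fin N))
    (hsymm : ∀ i j : Fin N, (i, j) ∈ A → (j, i) ∈ A)
    (hdiag : ∀ i : Fin N, (i, i) ∉ A)
    (γ : Fin N → Fin N → ℝ)
    (hγsymm : ∀ i j, γ i j = γ j i)
    (hγ0 : ∀ i j, 0 ≤ γ i j) (hγg : ∀ i j, γ i j ≤ g)
    (z : ℝ → Fin N → ℝ)
    (hzcont : ∀ i, ContinuousOn (fun t => z t i) (Set.Icc 0 T))
    (hzsep : ∀ t ∈ Set.Icc (0 : ℝ) T, ∀ i j : Fin N, (i, j) ∈ A → z t i ≠ z t j)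
    (u : ℝ → Fin N → ℝ)
    (hu0 : ∀ i, u 0 i = 0)
    (hode : ∀ t ∈ Set.Icc (0 : ℝ) T, ∀ i : Fin N,
      HasDerivAt (fun s => u s i)
        ((∑ j ∈ Finset.univ.filter (fun j : Fin N => (i, j) ∈ A),
            (1 - γ i j) * (u t j - u t i) / ((N : ℝ) * (z t i - z t j) ^ 2)) +
          (1 / (N : ℝ)) * ∑ j ∈ Finset.univ.filter (fun j : Fin N => (i, j) ∈ A),
            γ i j / (z t i - z t j)) t) :
    ∀ t ∈ Set.Icc (0 : ℝ) T, (1 / (N : ℝ)) * ∑ i, (u t i) ^ 2 ≤ t * g ^ 2 := by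
  intro t ht
  simpa [hu0] using energy_estimate_interpolating_ode_general hN (Fintype.card_fin N)
    (by linarith) hsymm hγsymm (fun i j => (abs_of_nonneg (hγ0 i j)).trans_le (hγg i j)) hzsep
    (fun s hs i => (hode s hs i).hasDerivWithinAt) ht
end
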